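/- arXiv:2004.03308 — 2 statements merged into one kernel-verified Lean document; each statement's English description precedes it below -/
import Mathlib

section
/- Let a ∈ P*₋ and b, c ∈ P*₊ be such that the underlying primes of a, b, c are pairwise distinct, and let K = ℚ(√a, √b, √c). Then 2 divides the class number h(K). -/
open NumberField

/-- `Qsqrt m` is the subfield `ℚ(√m)` of `ℂ`, generated by a square root of `m`. -/
noncomputable def Qsqrt (m : ℤ) : IntermediateField ℚ ℂ :=
  IntermediateField.adjoin ℚ {(m : ℂ) ^ ((1 : ℂ) / 2)}

/-- `m` belongs to `P* = {8, -4, -8} ∪ {p* : p odd prime}` where `p* = (-1)^((p-1)/2) * p`. -/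
def Pstar (m : ℤ) : Prop :=
  m = 8 ∨ m = -4 ∨ m = -8 ∨ ∃ p : ℕ, p.Prime ∧ Odd p ∧ m = (-1) ^ ((p - 1) / 2) * (p : ℤ)

/-- The underlying prime of an element of `P*`: `2` for `8, -4, -8`, and `p` for `p*`. -/
def underlyingPrime (m : ℤ) : ℕ :=
  if m = 8 ∨ m = -4 ∨ m = -8 then 2 else m.natAbs

/-!
Let `K` be a CM field with two distinct primes `P`, `Q` that ramify over its maximal real subfield
`K⁺`, and suppose that `h(K)` is odd. Then `P ^ h(K) = (x)` and `Q ^ h(K) = (y)`, both ideals are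
stable under complex conjugation, and so `x̄ = x * ζ` and `ȳ = y * η` with roots of unity `ζ`, `η`.
If `ζ = z ^ 2`, then `x * z` is real and generates `P ^ h(K)`, whereas ideals coming from `K⁺` have
even valuation at `P`; so `ζ` is not a square, nor is `η`, nor, by the same argument for
`x * y`, is `ζ * η`. This is absurd in the cyclic group of roots of unity of `K`.

For `K = ℚ(√a, √b, √c)` let `p` be the prime dividing `a`. Inertia at `p` is nontrivial and fixes
`√b` and `√c`, so it is generated by complex conjugation: every prime over `p` ramifies over `K⁺`.
There is more than one such prime, because decomposition modulo inertia is cyclic, and no single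
automorphism moves all of `√b`, `√c` and `√b * √c`.
-/

open scoped Pointwise

section SquareRoots

variable {F K : Type*} [Field F] [Field K] [Algebra F K]

theorem isIntegral_of_sq_mem_range {x : K} (hx : x ^ 2 ∈ (algebraMap F K).range) :
    IsIntegral F x := by
  obtain ⟨d, hd⟩ := hx
  exact .of_pow two_pos (hd ▸ isIntegral_algebraMap)

theorem splits_minpoly_of_sq_mem_range {x : K} (hx : x ^ 2 ∈ (algebraMap F K).range) :
    ((minpoly F x).map (algebraMap F K)).Splits := by
  obtain ⟨d, hd⟩ := hx
  have hdvd : minpoly F x ∣ Polynomial.X ^ 2 - Polynomial.C d := minpoly.dvd F x (by simp [hd])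
  have hsplits : (Polynomial.X ^ 2 - Polynomial.C (x ^ 2) : Polynomial K).Splits := by
    rw [map_pow, sq_sub_sq]
    simp [(Polynomial.Splits.X_add_C x).mul (Polynomial.Splits.X_sub_C x)]
  refine hsplits.of_dvd (Polynomial.monic_X_pow_sub_C _ two_ne_zero).ne_zero ?_
  simpa [hd] using Polynomial.map_dvd (algebraMap F K) hdvd

theorem apply_eq_or_eq_neg_of_sq_mem_range {x : K} (hx : x ^ 2 ∈ (algebraMap F K).range)
    (τ : Gal(K/F)) : τ x = x ∨ τ x = -x := by
  obtain ⟨d, hd⟩ := hx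
  exact sq_eq_sq_iff_eq_or_eq_neg.1 (by rw [← map_pow, ← hd, τ.commutes])

theorem galois_ext_of_adjoin_eq_top {S : Set K} (hS : IntermediateField.adjoin F S = ⊤)
    {σ τ : Gal(K/F)} (h : ∀ x ∈ S, σ x = τ x) : σ = τ := by
  have hrestrict : (σ : K →ₐ[F] K).comp (⊤ : IntermediateField F K).val =
      (τ : K →ₐ[F] K).comp (⊤ : IntermediateField F K).val :=
    IntermediateField.algHom_ext_of_eq_adjoin F hS.symm h
  exact AlgEquiv.ext fun x => DFunLike.congr_fun hrestrict ⟨x, IntermediateField.mem_top⟩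

variable {S : Set K}

theorem finiteDimensional_of_adjoin_sq_mem_range [Finite S] (hS : IntermediateField.adjoin F S = ⊤)
    (hsq : ∀ x ∈ S, x ^ 2 ∈ (algebraMap F K).range) : FiniteDimensional F K := by
  have := IntermediateField.finiteDimensional_adjoin fun x hx =>
    isIntegral_of_sq_mem_range (hsq x hx)
  rw [hS] at this
  exact .of_surjective IntermediateField.topEquiv.toLinearMap IntermediateField.topEquiv.surjective

theorem normal_of_adjoin_sq_mem_range (hS : IntermediateField.adjoin F S = ⊤)
    (hsq : ∀ x ∈ S, x ^ 2 ∈ (algebraMap F K).range) : Normal F K := by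
  have h : Algebra.IsAlgebraic F (⊤ : IntermediateField F K) := hS ▸
    IntermediateField.isAlgebraic_adjoin fun x hx => isIntegral_of_sq_mem_range (hsq x hx)
  refine normal_iff.2 fun x => ⟨?_, IntermediateField.splits_of_mem_adjoin F K (S := S)
    (fun y hy => ⟨isIntegral_of_sq_mem_range (hsq y hy), splits_minpoly_of_sq_mem_range (hsq y hy)⟩)
    (hS ▸ IntermediateField.mem_top)⟩
  exact (IntermediateField.isAlgebraic_iff.1
    (h.isAlgebraic ⟨x, IntermediateField.mem_top⟩)).isIntegral

theorem isMulCommutative_galois_of_adjoin_sq_mem_range (hS : IntermediateField.adjoin F S = ⊤)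
    (hsq : ∀ x ∈ S, x ^ 2 ∈ (algebraMap F K).range) : IsMulCommutative Gal(K/F) := by
  refine ⟨⟨fun σ τ => galois_ext_of_adjoin_eq_top hS fun x hx => ?_⟩⟩
  rcases apply_eq_or_eq_neg_of_sq_mem_range (hsq x hx) σ with hσ | hσ <;>
    rcases apply_eq_or_eq_neg_of_sq_mem_range (hsq x hx) τ with hτ | hτ <;>
    simp [AlgEquiv.mul_apply, hσ, hτ]

theorem isAbelianGalois_of_adjoin_sq_mem_range [PerfectField F]
    (hS : IntermediateField.adjoin F S = ⊤)
    (hsq : ∀ x ∈ S, x ^ 2 ∈ (algebraMap F K).range) : IsAbelianGalois F K := by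
  have := normal_of_adjoin_sq_mem_range hS hsq
  have := isMulCommutative_galois_of_adjoin_sq_mem_range hS hsq
  have : IsGalois F K := ⟨⟩
  exact ⟨⟩

theorem galois_eq_of_ne_one_of_forall_apply_eq_self {α : K}
    (hS : IntermediateField.adjoin F (insert α S) = ⊤) (hα : α ^ 2 ∈ (algebraMap F K).range)
    {σ τ : Gal(K/F)} (hσ : σ ≠ 1) (hτ : τ ≠ 1)
    (hσS : ∀ x ∈ S, σ x = x) (hτS : ∀ x ∈ S, τ x = x) : σ = τ := by
  have apply_eq_neg {ρ : Gal(K/F)} (hρ : ρ ≠ 1) (hρS : ∀ x ∈ S, ρ x = x) : ρ α = -α :=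
    (apply_eq_or_eq_neg_of_sq_mem_range hα ρ).resolve_left fun h =>
      hρ (galois_ext_of_adjoin_eq_top hS (Set.forall_mem_insert.2 ⟨h, hρS⟩))
  refine galois_ext_of_adjoin_eq_top hS (Set.forall_mem_insert.2 ⟨?_, fun x hx => ?_⟩)
  · rw [apply_eq_neg hσ hσS, apply_eq_neg hτ hτS]
  · rw [hσS x hx, hτS x hx]

theorem exists_galois_apply_ne [FiniteDimensional F K] [IsGalois F K] {x : K} {d : F}
    (hx : x ^ 2 = algebraMap F K d) (hd : ¬IsSquare d) : ∃ τ : Gal(K/F), τ x ≠ x := by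
  by_contra! hfix
  obtain ⟨s, rfl⟩ := IntermediateField.mem_bot.1 ((IsGalois.mem_bot_iff_fixed x).2 hfix)
  exact hd ⟨s, (algebraMap F K).injective (by rw [map_mul, ← hx, sq])⟩

end SquareRoots

theorem exists_pow_card_classGroup_eq_span {R : Type*} [CommRing R] [IsDedekindDomain R]
    {J : Ideal R} (hJ : J ≠ ⊥) : ∃ x, J ^ Nat.card (ClassGroup R) = Ideal.span {x} := by
  have hpow : ClassGroup.mk0 ⟨J, mem_nonZeroDivisors_of_ne_zero hJ⟩ ^ Nat.card (ClassGroup R) = 1 :=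
    pow_card_eq_one'
  rw [← map_pow, SubmonoidClass.mk_pow, ClassGroup.mk0_eq_one_iff] at hpow
  exact ⟨_, (Submodule.IsPrincipal.span_singleton_generator _).symm⟩

theorem exists_stabilizer_le_inertia_sup_zpowers {A B : Type*} [CommRing A] [CommRing B]
    [Algebra A B] (G : Type*) [Group G] [Finite G] [MulSemiringAction G B] [SMulCommClass G A B]
    [Algebra.IsInvariant A B G] (P : Ideal A) (Q : Ideal B) [Q.IsPrime] [Q.LiesOver P]
    [Finite (B ⧸ Q)] :
    ∃ φ : G, MulAction.stabilizer G Q ≤ Q.inertia G ⊔ Subgroup.zpowers φ := by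
  have : Algebra.IsIntegral A B := Algebra.IsInvariant.isIntegral A B G
  have : Q.IsMaximal := Ideal.Quotient.maximal_of_isField Q (Finite.isField_of_domain (B ⧸ Q))
  have : P.IsMaximal := Ideal.over_def Q P ▸ inferInstance
  let := Ideal.Quotient.field P
  let := Ideal.Quotient.field Q
  obtain ⟨g, hg⟩ := IsCyclic.exists_generator (α := Gal((B ⧸ Q)/(A ⧸ P)))
  obtain ⟨⟨φ, hφ⟩, rfl⟩ := Ideal.Quotient.stabilizerHom_surjective G P Q g
  refine ⟨φ, fun σ hσ => ?_⟩
  obtain ⟨n, hn⟩ := Subgroup.mem_zpowers_iff.1 (hg (Ideal.Quotient.stabilizerHom Q P G ⟨σ, hσ⟩))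
  have hker : (⟨σ, hσ⟩ : MulAction.stabilizer G Q) * ⟨φ, hφ⟩ ^ (-n) ∈
      (Ideal.Quotient.stabilizerHom Q P G).ker := by
    rw [MonoidHom.mem_ker, map_mul, map_zpow, zpow_neg, ← hn, mul_inv_cancel]
  have hin := Subgroup.mem_map_of_mem (MulAction.stabilizer G Q).subtype hker
  rw [Ideal.Quotient.map_ker_stabilizer_subtype] at hin
  simpa using Subgroup.mul_mem_sup hin (Subgroup.zpow_mem_zpowers φ n)

theorem card_inertia_eq_ramificationIdx' {A B G : Type*} [CommRing A] [IsDomain A] [CommRing B]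
    [IsDedekindDomain B] [Algebra A B] [Module.Finite A B] [Module.Flat A B]
    [Module.IsTorsionFree A B] [Group G] [Finite G] [MulSemiringAction G B] [IsGaloisGroup G A B]
    {p : Ideal A} [p.IsPrime] [PerfectField p.ResidueField] (hp : p ≠ ⊥)
    (P : Ideal B) [P.IsPrime] [P.LiesOver p] :
    Nat.card (P.inertia G) = p.ramificationIdx' P := by
  rw [Ideal.card_inertia_eq_ramificationIdxIn p, Ideal.ramificationIdxIn_eq_ramificationIdx p P G,
    Ideal.ramificationIdx'_eq_ramificationIdx p P hp]

theorem even_multiplicity_of_sq_eq_mul {M : Type*} [CommMonoidWithZero M] [IsCancelMulZero M]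
    {P r s t : M} (hP : Prime P) (ht : FiniteMultiplicity P t) (h : t ^ 2 = r * s) (hs : ¬P ∣ s) :
    Even (multiplicity P r) := by
  have hmul := multiplicity_mul hP (h ▸ ht.pow hP)
  rw [← h, ht.multiplicity_pow hP, multiplicity_eq_zero.2 hs, add_zero] at hmul
  exact hmul ▸ even_two_mul _

theorem isSquare_mul_of_not_isSquare {G : Type*} [CommGroup G] [IsCyclic G] {u v : G}
    (hu : ¬IsSquare u) (hv : ¬IsSquare v) : IsSquare (u * v) := by
  obtain ⟨g, hg⟩ := IsCyclic.exists_generator (α := G)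
  obtain ⟨i, rfl⟩ := Subgroup.mem_zpowers_iff.1 (hg u)
  obtain ⟨j, rfl⟩ := Subgroup.mem_zpowers_iff.1 (hg v)
  have hi : Odd i := Int.not_even_iff_odd.1 fun h => hu (h.isSquare_zpow g)
  have hj : Odd j := Int.not_even_iff_odd.1 fun h => hv (h.isSquare_zpow g)
  rw [← zpow_add]
  exact (hi.add_odd hj).isSquare_zpow g

section CM

open NumberField.IsCMField NumberField.Units

variable {K : Type*} [Field K] [NumberField K] [IsCMField K]

theorem exists_torsion_complexConj_eq_mul {x : 𝓞 K} (hx : x ≠ 0)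
    (h : complexConj K • Ideal.span {x} = Ideal.span {x}) :
    ∃ ζ : torsion K, complexConj K • x = x * (ζ : (𝓞 K)ˣ) := by
  rw [Ideal.pointwise_smul_def, Ideal.map_span, Set.image_singleton,
    Ideal.span_singleton_eq_span_singleton] at h
  obtain ⟨u, hu⟩ := h.symm
  refine ⟨⟨u, (mem_torsion K).2 fun w => ?_⟩, hu.symm⟩
  have hw : w x * w u = w x := by
    rw [← map_mul, ← map_mul, hu]
    exact infinitePlace_complexConj K w x
  exact (mul_eq_left₀ (by simpa using hx)).1 hw

theorem exists_complexConj_smul_eq_self {x : 𝓞 K} {ζ : torsion K} (hζ : IsSquare ζ)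
    (hx : complexConj K • x = x * (ζ : (𝓞 K)ˣ)) :
    ∃ y : 𝓞 K, Ideal.span {y} = Ideal.span {x} ∧ complexConj K • y = y := by
  obtain ⟨z, rfl⟩ := hζ
  refine ⟨x * (z : (𝓞 K)ˣ), Ideal.span_singleton_mul_right_unit (Units.isUnit _) x, ?_⟩
  have hz : complexConj K • ((z : (𝓞 K)ˣ) : 𝓞 K) = (((z : (𝓞 K)ˣ)⁻¹ : (𝓞 K)ˣ) : 𝓞 K) :=
    congrArg Units.val (unitsComplexConj_torsion K z)
  rw [smul_mul', hx, hz]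
  simp [mul_assoc]

variable {P : Ideal (𝓞 K)} [P.IsPrime]

theorem even_multiplicity_of_complexConj_smul_eq_self (hP0 : P ≠ ⊥)
    (hP : complexConj K ∈ P.inertia Gal(K/maximalRealSubfield K)) {x : 𝓞 K} (hx0 : x ≠ 0)
    (hx : complexConj K • x = x) : Even (multiplicity P (Ideal.span {x})) := by
  obtain ⟨y, rfl⟩ := (ringOfIntegersComplexConj_eq_self_iff K x).1 hx
  let q := P.under (𝓞 (maximalRealSubfield K))
  have hq0 : q ≠ ⊥ := fun h => hP0 (Ideal.eq_bot_of_comap_eq_bot h)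
  have hinertia : P.inertia Gal(K/maximalRealSubfield K) = ⊤ := by
    rwa [eq_top_iff, ← zpowers_complexConj_eq_top, Subgroup.zpowers_le]
  have hram : q.ramificationIdx' P = 2 := by
    rw [← card_inertia_eq_ramificationIdx' (G := Gal(K/maximalRealSubfield K)) hq0, hinertia,
      Subgroup.card_top, IsGalois.card_aut_eq_finrank, Algebra.IsQuadraticExtension.finrank_eq_two]
  have hq : Prime q := Ideal.prime_of_isPrime hq0 inferInstance
  have hy0 : Ideal.span {y} ≠ ⊥ := by
    rw [Ne, Ideal.span_singleton_eq_bot]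
    rintro rfl
    exact hx0 (map_zero _)
  have hmul := Ideal.IsDedekindDomain.emultiplicity_map_eq_ramificationIdx'_mul
    hy0 hq.irreducible (Ideal.prime_of_isPrime hP0 ‹_›).irreducible hP0
  rw [hram, Ideal.map_span, Set.image_singleton,
    (FiniteMultiplicity.of_prime_left hq hy0).emultiplicity_eq_multiplicity] at hmul
  rw [multiplicity_eq_of_emultiplicity_eq_some (mod_cast hmul)]
  exact even_two_mul _

theorem not_isSquare_of_odd_multiplicity (hP0 : P ≠ ⊥)
    (hP : complexConj K ∈ P.inertia Gal(K/maximalRealSubfield K)) {x : 𝓞 K} (hx0 : x ≠ 0)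
    {ζ : torsion K} (hx : complexConj K • x = x * (ζ : (𝓞 K)ˣ))
    (hodd : Odd (multiplicity P (Ideal.span {x}))) : ¬IsSquare ζ := by
  intro hζ
  obtain ⟨y, hyx, hy⟩ := exists_complexConj_smul_eq_self hζ hx
  have hy0 : y ≠ 0 := by
    rintro rfl
    exact hx0 (Ideal.span_singleton_eq_bot.1 (by rw [← hyx, Ideal.span_singleton_zero]))
  exact Nat.not_even_iff_odd.2 hodd
    (hyx ▸ even_multiplicity_of_complexConj_smul_eq_self hP0 hP hy0 hy)

theorem exists_torsion_pow_eq_span {P : Ideal (𝓞 K)} (hP0 : P ≠ ⊥)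
    (hP : complexConj K ∈ P.inertia Gal(K/maximalRealSubfield K)) :
    ∃ x : 𝓞 K, P ^ Nat.card (ClassGroup (𝓞 K)) = Ideal.span {x} ∧ x ≠ 0 ∧
    ∃ ζ : torsion K, complexConj K • x = x * (ζ : (𝓞 K)ˣ) := by
  obtain ⟨x, hx⟩ := exists_pow_card_classGroup_eq_span hP0
  have hx0 : x ≠ 0 := by
    rintro rfl
    exact pow_ne_zero _ hP0 (by simpa using hx)
  refine ⟨x, hx, hx0, exists_torsion_complexConj_eq_mul hx0 ?_⟩
  rw [← hx, smul_pow', Ideal.inertia_le_stabilizer P hP]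

theorem two_dvd_card_classGroup_of_isCMField {Q : Ideal (𝓞 K)} [Q.IsPrime] (hP0 : P ≠ ⊥)
    (hQ0 : Q ≠ ⊥) (hPQ : P ≠ Q) (hP : complexConj K ∈ P.inertia Gal(K/maximalRealSubfield K))
    (hQ : complexConj K ∈ Q.inertia Gal(K/maximalRealSubfield K)) :
    2 ∣ Nat.card (ClassGroup (𝓞 K)) := by
  by_contra hodd
  rw [← even_iff_two_dvd, Nat.not_even_iff_odd] at hodd
  have hPp : Prime P := Ideal.prime_of_isPrime hP0 ‹_›
  have hQp : Prime Q := Ideal.prime_of_isPrime hQ0 ‹_›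
  obtain ⟨x, hxP, hx0, ζ, hζ⟩ := exists_torsion_pow_eq_span hP0 hP
  obtain ⟨y, hyQ, hy0, η, hη⟩ := exists_torsion_pow_eq_span hQ0 hQ
  have hζsq : ¬IsSquare ζ := not_isSquare_of_odd_multiplicity hP0 hP hx0 hζ
    (by rwa [← hxP, multiplicity_pow_self_of_prime hPp])
  have hηsq : ¬IsSquare η := not_isSquare_of_odd_multiplicity hQ0 hQ hy0 hη
    (by rwa [← hyQ, multiplicity_pow_self_of_prime hQp])
  have hxy : complexConj K • (x * y) = x * y * ((ζ * η : torsion K) : (𝓞 K)ˣ) := by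
    rw [smul_mul', hζ, hη]
    push_cast
    ring
  have hPQdvd : ¬P ∣ Q ^ Nat.card (ClassGroup (𝓞 K)) := fun h =>
    hPQ (((‹Q.IsPrime›.isMaximal hQ0).eq_of_le ‹P.IsPrime›.ne_top
      (Ideal.le_of_dvd (hPp.dvd_of_dvd_pow h))).symm)
  refine not_isSquare_of_odd_multiplicity hP0 hP (mul_ne_zero hx0 hy0) hxy ?_
    (isSquare_mul_of_not_isSquare hζsq hηsq)
  rwa [← Ideal.span_singleton_mul_span_singleton, ← hxP, ← hyQ, multiplicity_mul hPp
      (.of_prime_left hPp (mul_ne_zero (pow_ne_zero _ hP0) (pow_ne_zero _ hQ0))),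
    multiplicity_pow_self_of_prime hPp, multiplicity_eq_zero.2 hPQdvd, add_zero]

theorem complexConj_apply_eq_self_of_sq_eq {r : K} {d : ℤ} (hd : 0 ≤ d) (hr : r ^ 2 = d) :
    complexConj K r = r := by
  obtain ⟨φ⟩ : Nonempty (K →+* ℂ) := inferInstance
  refine φ.injective ?_
  have hφr : φ r ^ 2 = (√(d : ℝ) : ℂ) ^ 2 := by
    rw [← map_pow, hr, ← Complex.ofReal_pow, Real.sq_sqrt (mod_cast hd)]
    simp
  rw [complexEmbedding_complexConj]
  rcases sq_eq_sq_iff_eq_or_eq_neg.1 hφr with h | h <;> simp [h]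

theorem complexConj_mem_inertia_of_adjoin_eq_top {α : K} {S : Set K}
    (hS : IntermediateField.adjoin ℚ (insert α S) = ⊤) (hα : α ^ 2 ∈ (algebraMap ℚ K).range)
    (hconj : ∀ x ∈ S, complexConj K x = x) {P : Ideal (𝓞 K)}
    (hPS : ∀ x ∈ S, P.inertia Gal(K/ℚ) ≤ MulAction.stabilizer Gal(K/ℚ) x)
    (hP : P.inertia Gal(K/ℚ) ≠ ⊥) :
    complexConj K ∈ P.inertia Gal(K/maximalRealSubfield K) := by
  obtain ⟨⟨τ, hτP⟩, hτ⟩ := Subgroup.ne_bot_iff_exists_ne_one.1 hP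
  have hκ : (complexConj K).restrictScalars ℚ ≠ 1 := fun h =>
    complexConj_ne_one K (AlgEquiv.restrictScalars_injective ℚ h)
  obtain rfl : τ = (complexConj K).restrictScalars ℚ :=
    galois_eq_of_ne_one_of_forall_apply_eq_self hS hα
      (fun h => hτ (Subtype.ext h)) hκ (fun x hx => hPS x hx hτP) hconj
  exact hτP

end CM

theorem isTotallyComplex_of_sq_eq_of_neg {K : Type*} [Field K] {d : ℤ} (hd : d < 0) {r : K}
    (hr : r ^ 2 = d) : IsTotallyComplex K := by
  refine ⟨fun v => InfinitePlace.not_isReal_iff_isComplex.1 fun hv => ?_⟩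
  have hsq : InfinitePlace.embedding_of_isReal hv r ^ 2 = d := by rw [← map_pow, hr, map_intCast]
  have hd' : (d : ℝ) < 0 := mod_cast hd
  exact (hsq ▸ hd').not_ge (sq_nonneg _)

/-- `d` is the discriminant of a quadratic order over `ℤ`, equivalently of a monic integral
quadratic polynomial. Degenerate orders are included, so `d` may be a square, even `0`. -/
def IsDiscriminant (d : ℤ) : Prop :=
  d % 4 = 0 ∨ d % 4 = 1

theorem IsDiscriminant.mul {d e : ℤ} (hd : IsDiscriminant d) (he : IsDiscriminant e) :
    IsDiscriminant (d * e) := by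
  unfold IsDiscriminant at *
  rw [Int.mul_emod]
  rcases hd with hd | hd <;> rcases he with he | he <;> simp [hd, he]

theorem isIntegral_add_div_two {K : Type*} [Field K] [CharZero K] {d : ℤ}
    (hd : IsDiscriminant d) {r : K} (hr : r ^ 2 = d) : IsIntegral ℤ ((d + r) / 2) := by
  obtain ⟨e, he⟩ : ∃ e, d * (d - 1) = 4 * e := by
    rcases hd with hd | hd
    · exact Dvd.dvd.mul_right (Int.dvd_of_emod_eq_zero hd) _
    · exact Dvd.dvd.mul_left ((Int.dvd_self_sub_of_emod_eq hd)) _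
  have heK : (d : K) * (d - 1) = 4 * e := by exact_mod_cast he
  refine ⟨Polynomial.X ^ 2 - Polynomial.C d * Polynomial.X + Polynomial.C e, by monicity!, ?_⟩
  simp only [Polynomial.eval₂_add, Polynomial.eval₂_sub, Polynomial.eval₂_mul,
    Polynomial.eval₂_X_pow, Polynomial.eval₂_X, Polynomial.eval₂_C, algebraMap_int_eq,
    Int.coe_castRingHom]
  linear_combination hr / 4 - heK / 4

theorem exists_ringOfIntegers_sq_eq {K : Type*} [Field K] {d : ℤ} {r : K} (hr : r ^ 2 = d) :
    ∃ x : 𝓞 K, (x : K) = r ∧ x ^ 2 = d :=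
  ⟨⟨r, .of_pow two_pos (hr ▸ isIntegral_algebraMap (x := d))⟩, rfl, by ext; exact hr⟩

theorem inertia_le_stabilizer_of_sq_eq {K : Type*} [Field K] [CharZero K] {d : ℤ}
    (hd : IsDiscriminant d) {r : K} (hr : r ^ 2 = d) (P : Ideal (𝓞 K))
    (hdP : (d : 𝓞 K) ∉ P) : P.inertia Gal(K/ℚ) ≤ MulAction.stabilizer Gal(K/ℚ) r := by
  intro τ hτ
  refine (apply_eq_or_eq_neg_of_sq_mem_range (hr ▸ intCast_mem _ d) τ).resolve_right fun hneg => ?_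
  obtain ⟨x, hxr, hx⟩ := exists_ringOfIntegers_sq_eq hr
  -- `r` itself would only give `2 * r ∈ P`, which is no contradiction at `2`.
  let θ : 𝓞 K := ⟨(d + r) / 2, isIntegral_add_div_two hd hr⟩
  have hθ : τ • θ - θ = -x := by
    ext
    change τ ((d + r) / 2) - (d + r) / 2 = -(x : K)
    rw [map_div₀, map_add, map_intCast, map_ofNat, hneg, hxr]
    ring
  have hxP : x ∈ P := neg_mem_iff.1 (hθ ▸ hτ θ)
  exact hdP (hx ▸ P.pow_mem_of_mem hxP 2 two_pos)

theorem exists_smul_ne_of_not_isSquare {K : Type*} [Field K] [NumberField K] [IsGalois ℚ K]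
    {P : Ideal (𝓞 K)} [P.IsPrime] (hP0 : P ≠ ⊥) {b c : ℤ}
    (hb : IsDiscriminant b) (hc : IsDiscriminant c) (hbP : (b : 𝓞 K) ∉ P) (hcP : (c : 𝓞 K) ∉ P)
    (hbsq : ¬IsSquare b) (hcsq : ¬IsSquare c)
    (hbcsq : ¬IsSquare (b * c)) {β γ : K} (hβ : β ^ 2 = b) (hγ : γ ^ 2 = c) :
    ∃ τ : Gal(K/ℚ), τ • P ≠ P := by
  by_contra! hfix
  have : Finite (𝓞 K ⧸ P) := Ideal.finiteQuotientOfFreeOfNeBot P hP0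
  obtain ⟨φ, hφ⟩ := exists_stabilizer_le_inertia_sup_zpowers Gal(K/ℚ) (P.under ℤ) P
  have apply_ne {d : ℤ} {r : K} (hd : IsDiscriminant d) (hdP : (d : 𝓞 K) ∉ P)
      (hsq : ¬IsSquare d) (hr : r ^ 2 = d) : φ r ≠ r := by
    intro hφr
    obtain ⟨τ, hτ⟩ := exists_galois_apply_ne (F := ℚ) (d := d) (x := r) (by simpa using hr)
      (mt Rat.isSquare_intCast_iff.1 hsq)
    have hle : P.inertia Gal(K/ℚ) ⊔ Subgroup.zpowers φ ≤ MulAction.stabilizer Gal(K/ℚ) r :=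
      sup_le (inertia_le_stabilizer_of_sq_eq hd hr P hdP) (Subgroup.zpowers_le.2 hφr)
    exact hτ (hle (hφ (hfix τ)))
  have apply_eq_neg {d : ℤ} {r : K} (hd : IsDiscriminant d) (hdP : (d : 𝓞 K) ∉ P)
      (hsq : ¬IsSquare d) (hr : r ^ 2 = d) : φ r = -r :=
    (apply_eq_or_eq_neg_of_sq_mem_range (F := ℚ) (hr ▸ intCast_mem _ d) φ).resolve_left
      (apply_ne hd hdP hsq hr)
  have hbcP : ((b * c : ℤ) : 𝓞 K) ∉ P := by
    rw [Int.cast_mul]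
    exact Ideal.IsPrime.mul_notMem ‹_› hbP hcP
  refine apply_ne (hb.mul hc) hbcP hbcsq (r := β * γ) (by rw [mul_pow, hβ, hγ, Int.cast_mul]) ?_
  rw [map_mul, apply_eq_neg hb hbP hbsq hβ, apply_eq_neg hc hcP hcsq hγ, neg_mul_neg]

/-- `d` is `1` or the discriminant of the maximal order of a quadratic field, that is, it is not
`n ^ 2` times a smaller discriminant. -/
def IsFundamentalDiscriminant (d : ℤ) : Prop :=
  IsDiscriminant d ∧ ∀ n d' : ℤ, IsDiscriminant d' → d = n ^ 2 * d' → IsUnit n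

theorem IsFundamentalDiscriminant.not_isSquare {d : ℤ} (hd : IsFundamentalDiscriminant d)
    (h1 : d ≠ 1) : ¬IsSquare d := by
  rintro ⟨n, rfl⟩
  have hn : IsUnit n := hd.2 n 1 (.inr rfl) (by ring)
  exact h1 (Int.isUnit_mul_self hn)

theorem IsFundamentalDiscriminant.isUnit_of_odd_of_sq_dvd {d n : ℤ}
    (hd : IsFundamentalDiscriminant d) (hn : Odd n) (hnd : n ^ 2 ∣ d) : IsUnit n := by
  obtain ⟨d', rfl⟩ := hnd
  have hmod : n ^ 2 * d' % 4 = d' % 4 := by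
    rw [Int.mul_emod, Int.sq_mod_four_eq_one_of_odd hn, one_mul, Int.emod_emod]
  exact hd.2 n d' (by simpa only [IsDiscriminant, hmod] using hd.1) rfl

theorem IsFundamentalDiscriminant.exists_eq_four_mul {d : ℤ} (hd : IsFundamentalDiscriminant d)
    (h2 : 2 ∣ d) : ∃ m, d = 4 * m ∧ (m % 4 = 2 ∨ m % 4 = 3) := by
  obtain ⟨m, rfl⟩ : 4 ∣ d := by
    have := hd.1
    unfold IsDiscriminant at this
    omega
  have hm : ¬IsDiscriminant m := fun hm => absurd (hd.2 2 m hm rfl) (by decide)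
  refine ⟨m, rfl, ?_⟩
  unfold IsDiscriminant at hm
  omega

theorem exists_sq_eq_prime_mul {K : Type*} [Field K] [CharZero K] {d : ℤ} {r : K} (hr : r ^ 2 = d)
    (hd : IsFundamentalDiscriminant d) {p : ℕ} (hp : p.Prime) (hpd : (p : ℤ) ∣ d) :
    ∃ t s : 𝓞 K, t ^ 2 = p * s ∧ IsCoprime s p := by
  rcases hp.eq_two_or_odd' with rfl | hodd
  · obtain ⟨m, rfl, hm⟩ := hd.exists_eq_four_mul hpd
    obtain ⟨u, -, hu⟩ := exists_ringOfIntegers_sq_eq (r := r / 2) (d := m)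
      (by rw [div_pow, hr]; push_cast; ring)
    rcases hm with hm | hm
    · obtain ⟨k, rfl⟩ : ∃ k, m = 2 * (2 * k + 1) := ⟨m / 4, by lia⟩
      exact ⟨u, 2 * k + 1, by rw [hu]; push_cast; ring, 1, -k, by push_cast; ring⟩
    · obtain ⟨k, rfl⟩ : ∃ k, m = 4 * k - 1 := ⟨m / 4 + 1, by lia⟩
      push_cast at hu
      -- `1 + √m` is a uniformizer at `2`, since `m ≡ 3` modulo `4`.
      refine ⟨1 + u, 2 * k + u, ?_, -u, k * u + 2 * k, ?_⟩ <;> push_cast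
      · linear_combination hu
      · linear_combination -hu
  · obtain ⟨k, rfl⟩ := hpd
    obtain ⟨u, -, hu⟩ := exists_ringOfIntegers_sq_eq hr
    have hpk : ¬(p : ℤ) ∣ k := fun h => (Nat.prime_iff_prime_int.1 hp).not_isUnit <|
      hd.isUnit_of_odd_of_sq_dvd (mod_cast hodd) (by rw [sq]; exact mul_dvd_mul_left _ h)
    have hco : IsCoprime k p := ((Nat.prime_iff_prime_int.1 hp).coprime_iff_not_dvd.2 hpk).symm
    exact ⟨u, k, by rw [hu]; push_cast; rfl, by simpa using hco.map (Int.castRingHom (𝓞 K))⟩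

theorem intCast_mem_iff_dvd {R : Type*} [CommRing R] {p n : ℤ} (P : Ideal R)
    [P.LiesOver (Ideal.span {p})] : (n : R) ∈ P ↔ p ∣ n := by
  rw [← Ideal.mem_span_singleton, Ideal.mem_of_liesOver P (Ideal.span {p}), eq_intCast]

section PrimeOver

variable {K : Type*} [Field K] [NumberField K] {p : ℕ} (P : Ideal (𝓞 K))
  [P.LiesOver (Ideal.span {(p : ℤ)})]

theorem inertia_ne_bot_of_sq_eq_mul [IsGalois ℚ K] [P.IsPrime] (hp : p.Prime)
    {s t : 𝓞 K} (ht : t ^ 2 = p * s) (hs : s ∉ P) :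
    P.inertia Gal(K/ℚ) ≠ ⊥ := by
  have hp0 : Ideal.span {(p : ℤ)} ≠ ⊥ := by simpa using hp.ne_zero
  have : (Ideal.span {(p : ℤ)}).IsPrime :=
    (Ideal.span_singleton_prime (mod_cast hp.ne_zero)).2 (Nat.prime_iff_prime_int.1 hp)
  have hP : Prime P := Ideal.prime_of_isPrime (Ideal.ne_bot_of_liesOver_of_ne_bot hp0 P) ‹_›
  have hmap : (Ideal.span {(p : ℤ)}).map (algebraMap ℤ (𝓞 K)) = Ideal.span {(p : 𝓞 K)} := by
    simp [Ideal.map_span]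
  have hcard : Nat.card (P.inertia Gal(K/ℚ)) = multiplicity P (Ideal.span {(p : 𝓞 K)}) := by
    rw [card_inertia_eq_ramificationIdx' hp0,
      Ideal.IsDedekindDomain.ramificationIdx'_eq_multiplicity (by rw [hmap]; simpa using hp.ne_zero)
        ‹_›,
      hmap]
  have ht0 : t ≠ 0 := by
    rintro rfl
    have hs0 : s = 0 := by simpa [hp.ne_zero] using ht
    exact hs (hs0 ▸ P.zero_mem)
  have heven : Even (Nat.card (P.inertia Gal(K/ℚ))) := hcard ▸
    even_multiplicity_of_sq_eq_mul hP (.of_prime_left hP (b := Ideal.span {t}) (by simpa using ht0))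
      (by simp [Ideal.span_singleton_pow, Ideal.span_singleton_mul_span_singleton, ht])
      (mt Ideal.dvd_span_singleton.1 hs)
  intro hbot
  rw [hbot, Subgroup.card_bot] at heven
  exact absurd heven (by decide)

theorem inertia_ne_bot_of_isFundamentalDiscriminant [IsGalois ℚ K] [P.IsPrime] {d : ℤ}
    (hd : IsFundamentalDiscriminant d) {r : K} (hr : r ^ 2 = d) (hp : p.Prime)
    (hpd : (p : ℤ) ∣ d) : P.inertia Gal(K/ℚ) ≠ ⊥ := by
  obtain ⟨t, s, ht, hsp⟩ := exists_sq_eq_prime_mul hr hd hp hpd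
  have hpP : (p : 𝓞 K) ∈ P := by simpa using (intCast_mem_iff_dvd P).2 (dvd_refl (p : ℤ))
  refine inertia_ne_bot_of_sq_eq_mul P hp ht fun hsP => ‹P.IsPrime›.ne_top ?_
  obtain ⟨u, v, huv⟩ := hsp
  exact P.eq_top_iff_one.2 (huv ▸ P.add_mem (P.mul_mem_left u hsP) (P.mul_mem_left v hpP))

end PrimeOver

theorem stmt5_general {K : Type*} [Field K] [CharZero K] {a b c : ℤ}
    (ha : IsFundamentalDiscriminant a) (haneg : a < 0) {p : ℕ} (hp : p.Prime) (hpa : (p : ℤ) ∣ a)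
    (hb : IsDiscriminant b) (hbpos : 0 < b) (hbsq : ¬IsSquare b) (hpb : ¬(p : ℤ) ∣ b)
    (hc : IsDiscriminant c) (hcpos : 0 < c) (hcsq : ¬IsSquare c) (hpc : ¬(p : ℤ) ∣ c)
    (hbcsq : ¬IsSquare (b * c)) {α β γ : K} (hα : α ^ 2 = a) (hβ : β ^ 2 = b) (hγ : γ ^ 2 = c)
    (hK : IntermediateField.adjoin ℚ {α, β, γ} = ⊤) : 2 ∣ Nat.card (ClassGroup (𝓞 K)) := by
  have hsq : ∀ x ∈ ({α, β, γ} : Set K), x ^ 2 ∈ (algebraMap ℚ K).range := by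
    rintro x (rfl | rfl | rfl)
    exacts [hα ▸ intCast_mem _ a, hβ ▸ intCast_mem _ b, hγ ▸ intCast_mem _ c]
  have : NumberField K :=
    { to_finiteDimensional := finiteDimensional_of_adjoin_sq_mem_range hK hsq }
  have : IsAbelianGalois ℚ K := isAbelianGalois_of_adjoin_sq_mem_range hK hsq
  have : IsTotallyComplex K := isTotallyComplex_of_sq_eq_of_neg haneg hα
  have hp0 : Ideal.span {(p : ℤ)} ≠ ⊥ := by simpa using hp.ne_zero
  have conj_mem (P : Ideal (𝓞 K)) [P.IsPrime] [P.LiesOver (Ideal.span {(p : ℤ)})] :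
      IsCMField.complexConj K ∈ P.inertia Gal(K/maximalRealSubfield K) := by
    refine complexConj_mem_inertia_of_adjoin_eq_top hK (hsq α (.inl rfl)) ?_ ?_
      (inertia_ne_bot_of_isFundamentalDiscriminant P ha hα hp hpa)
    · rintro x (rfl | rfl)
      exacts [complexConj_apply_eq_self_of_sq_eq hbpos.le hβ,
        complexConj_apply_eq_self_of_sq_eq hcpos.le hγ]
    · rintro x (rfl | rfl)
      exacts [inertia_le_stabilizer_of_sq_eq hb hβ P (mt (intCast_mem_iff_dvd P).1 hpb),
        inertia_le_stabilizer_of_sq_eq hc hγ P (mt (intCast_mem_iff_dvd P).1 hpc)]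
  have : (Ideal.span {(p : ℤ)}).IsPrime :=
    (Ideal.span_singleton_prime (mod_cast hp.ne_zero)).2 (Nat.prime_iff_prime_int.1 hp)
  obtain ⟨P, _, _⟩ : Nonempty ((Ideal.span {(p : ℤ)}).primesOver (𝓞 K)) := inferInstance
  have hP0 : P ≠ ⊥ := Ideal.ne_bot_of_liesOver_of_ne_bot hp0 P
  obtain ⟨τ, hτ⟩ := exists_smul_ne_of_not_isSquare hP0 hb hc (mt (intCast_mem_iff_dvd P).1 hpb)
    (mt (intCast_mem_iff_dvd P).1 hpc) hbsq hcsq hbcsq hβ hγ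
  have hτP0 : τ • P ≠ ⊥ := Ideal.ne_bot_of_liesOver_of_ne_bot hp0 (τ • P)
  exact two_dvd_card_classGroup_of_isCMField hP0 hτP0 hτ.symm (conj_mem P) (conj_mem (τ • P))

namespace Pstar

variable {m n : ℤ}

theorem even_or_prime (hm : Pstar m) :
    (m = 8 ∨ m = -4 ∨ m = -8) ∧ underlyingPrime m = 2 ∨
      m % 4 = 1 ∧ m.natAbs = underlyingPrime m ∧ (underlyingPrime m).Prime := by
  by_cases h : m = 8 ∨ m = -4 ∨ m = -8
  · exact .inl ⟨h, if_pos h⟩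
  obtain ⟨p, hp, ⟨k, rfl⟩, hpm⟩ : ∃ p : ℕ, p.Prime ∧ Odd p ∧ m = (-1) ^ ((p - 1) / 2) * p := by
    unfold Pstar at hm
    tauto
  rw [underlyingPrime, if_neg h]
  have habs : m.natAbs = 2 * k + 1 := by
    rw [hpm, Int.natAbs_mul, Int.natAbs_pow, Int.natAbs_neg, Int.natAbs_one, one_pow, one_mul,
      Int.natAbs_natCast]
  refine .inr ⟨?_, rfl, habs ▸ hp⟩
  rw [add_tsub_cancel_right, Nat.mul_div_cancel_left k two_pos] at hpm
  rcases Nat.even_or_odd k with hk | hk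
  · rw [hk.neg_one_pow] at hpm
    grind
  · rw [hk.neg_one_pow] at hpm
    grind

theorem prime_underlyingPrime (hm : Pstar m) : (underlyingPrime m).Prime := by
  rcases hm.even_or_prime with ⟨-, h⟩ | ⟨-, -, h⟩
  · exact h ▸ Nat.prime_two
  · exact h

theorem exists_natAbs_eq_pow (hm : Pstar m) : ∃ k, k ≠ 0 ∧ m.natAbs = underlyingPrime m ^ k := by
  rcases hm.even_or_prime with ⟨rfl | rfl | rfl, h⟩ | ⟨-, h, -⟩
  · exact ⟨3, three_ne_zero, by rw [h]; rfl⟩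
  · exact ⟨2, two_ne_zero, by rw [h]; rfl⟩
  · exact ⟨3, three_ne_zero, by rw [h]; rfl⟩
  · exact ⟨1, one_ne_zero, by rw [h, pow_one]⟩

theorem underlyingPrime_dvd (hm : Pstar m) : (underlyingPrime m : ℤ) ∣ m := by
  obtain ⟨k, hk, h⟩ := hm.exists_natAbs_eq_pow
  exact Int.natCast_dvd.2 (h ▸ dvd_pow_self _ hk)

theorem isCoprime (hm : Pstar m) (hn : Pstar n) (h : underlyingPrime m ≠ underlyingPrime n) :
    IsCoprime m n := by
  obtain ⟨k, -, hk⟩ := hm.exists_natAbs_eq_pow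
  obtain ⟨l, -, hl⟩ := hn.exists_natAbs_eq_pow
  rw [Int.isCoprime_iff_gcd_eq_one, Int.gcd, hk, hl]
  exact ((Nat.coprime_primes hm.prime_underlyingPrime hn.prime_underlyingPrime).2 h).pow k l

theorem not_underlyingPrime_dvd (hm : Pstar m) (hn : Pstar n)
    (h : underlyingPrime m ≠ underlyingPrime n) : ¬(underlyingPrime m : ℤ) ∣ n := fun hdvd =>
  (Nat.prime_iff_prime_int.1 hm.prime_underlyingPrime).not_isUnit
    ((hm.isCoprime hn h).isUnit_of_dvd' hm.underlyingPrime_dvd hdvd)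

theorem isFundamentalDiscriminant (hm : Pstar m) : IsFundamentalDiscriminant m := by
  rcases hm.even_or_prime with ⟨hm, -⟩ | ⟨hmod, habs, hp⟩
  · have hdisc : IsDiscriminant m := by
      unfold IsDiscriminant
      omega
    refine ⟨hdisc, fun n d hd hmn => ?_⟩
    have hm8 : m ∣ 8 := by rcases hm with rfl | rfl | rfl <;> decide
    have hn : n ^ 2 ≤ 8 := Int.le_of_dvd (by norm_num) ((Dvd.intro d hmn.symm).trans hm8)
    have hle : n ≤ 2 := by nlinarith
    have hge : -2 ≤ n := by nlinarith
    unfold IsDiscriminant at hd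
    rw [Int.isUnit_iff]
    interval_cases n <;> omega
  · refine ⟨.inr hmod, fun n d _ hmn => ?_⟩
    have hsq : n.natAbs * n.natAbs ∣ underlyingPrime m := by
      rw [← habs, hmn, Int.natAbs_mul, Int.natAbs_pow, sq]
      exact dvd_mul_right _ _
    exact Int.isUnit_iff_natAbs_eq.2 (Nat.isUnit_iff.1 (hp.prime.squarefree _ hsq))

theorem not_isSquare (hm : Pstar m) : ¬IsSquare m := by
  refine hm.isFundamentalDiscriminant.not_isSquare ?_
  rintro rfl
  exact (Nat.prime_iff_prime_int.1 hm.prime_underlyingPrime).not_dvd_one hm.underlyingPrime_dvd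

theorem not_isSquare_mul (hm : Pstar m) (hn : Pstar n) (hpos : 0 < m)
    (h : underlyingPrime m ≠ underlyingPrime n) : ¬IsSquare (m * n) := by
  rintro ⟨x, hx⟩
  obtain ⟨y, rfl | rfl⟩ := Int.sq_of_isCoprime (hm.isCoprime hn h) (hx.trans (sq x).symm)
  · exact hm.not_isSquare (.sq y)
  · exact hpos.not_ge (neg_nonpos.2 (sq_nonneg y))

end Pstar

theorem cpow_half_sq (z : ℂ) : (z ^ ((1 : ℂ) / 2)) ^ 2 = z := by
  rw [one_div, Complex.cpow_ofNat_inv_pow]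

theorem adjoin_eq_top_of_eq_adjoin_image_val {F E : Type*} [Field F] [Field E] [Algebra F E]
    {K : IntermediateField F E} {S : Set K}
    (hK : K = IntermediateField.adjoin F (Subtype.val '' S)) :
    IntermediateField.adjoin F S = ⊤ := by
  refine IntermediateField.lift_injective K ?_
  rw [IntermediateField.lift_adjoin, IntermediateField.lift_top, ← hK]

theorem exists_sqrt_adjoin_eq_top {a b c : ℤ} {K : IntermediateField ℚ ℂ}
    (hK : K = Qsqrt a ⊔ Qsqrt b ⊔ Qsqrt c) : ∃ α β γ : K, α ^ 2 = a ∧ β ^ 2 = b ∧ γ ^ 2 = c ∧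
    IntermediateField.adjoin ℚ {α, β, γ} = ⊤ := by
  let r (m : ℤ) : ℂ := (m : ℂ) ^ ((1 : ℂ) / 2)
  have hadjoin : K = IntermediateField.adjoin ℚ {r a, r b, r c} := by
    rw [hK, Qsqrt, Qsqrt, Qsqrt, ← IntermediateField.adjoin_union, ← IntermediateField.adjoin_union,
      Set.union_assoc, Set.singleton_union, Set.singleton_union]
  have hmem {z : ℂ} (hz : z ∈ ({r a, r b, r c} : Set ℂ)) : z ∈ K :=
    hadjoin ▸ IntermediateField.subset_adjoin ℚ _ hz
  refine ⟨⟨r a, hmem (by simp)⟩, ⟨r b, hmem (by simp)⟩, ⟨r c, hmem (by simp)⟩,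
    Subtype.ext (cpow_half_sq _), Subtype.ext (cpow_half_sq _), Subtype.ext (cpow_half_sq _),
    adjoin_eq_top_of_eq_adjoin_image_val ?_⟩
  rwa [Set.image_insert_eq, Set.image_pair]

/-- If `a ∈ P*₋` and `b, c ∈ P*₊` have pairwise distinct underlying primes, then
`2` divides the class number of `K = ℚ(√a, √b, √c)`. -/
theorem stmt5 (a b c : ℤ)
    (ha : Pstar a) (haneg : a < 0)
    (hb : Pstar b) (hbpos : 0 < b)
    (hc : Pstar c) (hcpos : 0 < c)
    (hab : underlyingPrime a ≠ underlyingPrime b)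
    (hac : underlyingPrime a ≠ underlyingPrime c)
    (hbc : underlyingPrime b ≠ underlyingPrime c)
    (K : IntermediateField ℚ ℂ) (hK : K = Qsqrt a ⊔ Qsqrt b ⊔ Qsqrt c) :
    2 ∣ Nat.card (ClassGroup (𝓞 K)) := by
  obtain ⟨α, β, γ, hα, hβ, hγ, hadjoin⟩ := exists_sqrt_adjoin_eq_top hK
  exact stmt5_general ha.isFundamentalDiscriminant haneg ha.prime_underlyingPrime
    ha.underlyingPrime_dvd hb.isFundamentalDiscriminant.1 hbpos hb.not_isSquare
    (ha.not_underlyingPrime_dvd hb hab) hc.isFundamentalDiscriminant.1 hcpos hc.not_isSquare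
    (ha.not_underlyingPrime_dvd hc hac) (hb.not_isSquare_mul hc hbpos hbc) hα hβ hγ hadjoin
end

section
/- Fix a positive odd integer u. Let K be an imaginary biquadratic field such that the exponent E(K) of Cl(K) divides u. Then K = ℚ(√p₁*, √p₂*) for some p₁* ∈ P*₋ and p₂* ∈ P* with E(ℚ(√p₁*)) dividing u, and moreover: if p₂* < 0 then E(ℚ(√p₂*)) divides u, while if p₂* > 0 then E(ℚ(√(p₁*p₂*))) divides 2u. -/
open NumberField

/-- An `n`-quadratic field realized as a subfield of `ℂ`. -/
def IsNQuadratic (n : ℕ) (K : IntermediateField ℚ ℂ) : Prop :=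
  FiniteDimensional ℚ K ∧ IsGalois ℚ K ∧
    Nonempty ((K ≃ₐ[ℚ] K) ≃* (Fin n → Multiplicative (ZMod 2)))

/-- A subfield of `ℂ` is imaginary if it is not contained in `ℝ`. -/
def IsImaginary (K : IntermediateField ℚ ℂ) : Prop :=
  ∃ x : K, (x : ℂ).im ≠ 0

/-- The exponent `E(K)` of the class group of a subfield `K` of `ℂ`. -/
noncomputable def Efield (K : IntermediateField ℚ ℂ) : ℕ :=
  Monoid.exponent (ClassGroup (𝓞 K))

/-!
Let `K` be imaginary biquadratic with `E(K)` dividing the odd number `u`. If the integer `d` has no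
square root in `K`, reciprocity and Dirichlet's theorem give a prime `q` that splits completely in
`K` while `(d/q) = -1`. A prime of `K` above `q` has norm `q` and its `u`-th power is principal, so
for every squarefree `m` with `√m ∈ K` the norm to `ℚ(√m)` yields `A² - m * B² = 4 * q ^ u`; norms
are positive because `K` is imaginary. As `u` is odd, this equation forbids `(d/q) = -1` for each
prime discriminant `d` dividing the discriminant of `ℚ(√m)`. Hence `K` contains the square roots of
all these `d`, and so is generated by square roots of elements of `P*`.

A quadratic subfield has exponent dividing `2 * u`, by taking the relative norm of a generator of
the `u`-th power of an extended ideal. For `d ∈ P*` negative, the class group of `ℚ(√d)` has no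
`2`-torsion, since its ambiguous ideals are principal, and the factor `2` disappears.
-/

open scoped NumberTheorySymbols

section JacobiSymbol

theorem exists_sq_mul_squarefree {e : ℤ} (he : e ≠ 0) :
    ∃ b m : ℤ, b ≠ 0 ∧ Squarefree m ∧ b ^ 2 * m = e := by
  obtain ⟨a, b, hab, ha⟩ := Nat.sq_mul_squarefree e.natAbs
  have hb : b ≠ 0 := by
    rintro rfl
    exact Int.natAbs_ne_zero.mpr he (by simpa using hab.symm)
  refine ⟨b, e.sign * a, by exact_mod_cast hb, ?_, ?_⟩
  · rwa [← Int.squarefree_natAbs, Int.natAbs_mul, Int.natAbs_sign_of_ne_zero he, one_mul,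
      Int.natAbs_natCast]
  · calc (b : ℤ) ^ 2 * (e.sign * a) = e.sign * (b ^ 2 * a : ℕ) := by push_cast; ring
      _ = e := by rw [hab, Int.sign_mul_natAbs]

theorem jacobiSym_eq_of_modEq {a : ℤ} {b c : ℕ} (hb : Odd b) (hc : Odd c)
    (h : b ≡ c [MOD 4 * a.natAbs]) : J(a | b) = J(a | c) := by
  rw [jacobiSym.mod_right a hb, jacobiSym.mod_right a hc, h]

theorem exists_odd_jacobiSym_eq_neg_one_of_odd_prime_dvd {p : ℕ} (hp : p.Prime) (hodd : Odd p)
    {m : ℤ} (hm : Squarefree m) (hpm : (p : ℤ) ∣ m) : ∃ g : ℕ, Odd g ∧ J(m | g) = -1 := by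
  have : Fact p.Prime := ⟨hp⟩
  obtain ⟨r, rfl⟩ := hpm
  have hcop : p.Coprime (4 * r.natAbs) := by
    refine Nat.Coprime.mul_right ((Nat.coprime_two_right.mpr hodd).pow_right 2) ?_
    rw [← Int.natAbs_natCast p]
    exact Int.isCoprime_iff_nat_coprime.mp (squarefree_mul_iff.mp hm).1.isCoprime
  obtain ⟨x, hx⟩ : ∃ x : ZMod p, quadraticChar (ZMod p) x = -1 :=
    quadraticChar_exists_neg_one (by
      rw [ZMod.ringChar_zmod_n]; rintro rfl; exact absurd hodd (by decide))
  obtain ⟨g, hgx, hg1⟩ := Nat.chineseRemainder hcop x.val 1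
  have hg4 : g % 4 = 1 := Nat.ModEq.of_mul_right _ hg1
  have hg : Odd g := by rw [Nat.odd_iff]; omega
  refine ⟨g, hg, ?_⟩
  have hJp : J((p : ℤ) | g) = -1 := by
    rw [jacobiSym.quadratic_reciprocity_one_mod_four' hodd hg4,
      ← jacobiSym.legendreSym.to_jacobiSym, legendreSym, Int.cast_natCast,
      (ZMod.natCast_eq_natCast_iff g x.val p).mpr hgx, ZMod.natCast_zmod_val, hx]
  rw [jacobiSym.mul_left, hJp, jacobiSym_eq_of_modEq hg odd_one hg1, jacobiSym.one_right, mul_one]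

theorem exists_odd_jacobiSym_eq_neg_one_of_squarefree {m : ℤ} (hm : Squarefree m) (h1 : m ≠ 1) :
    ∃ g : ℕ, Odd g ∧ J(m | g) = -1 := by
  obtain ⟨n, hn⟩ | ⟨p, hp, hpm, hodd⟩ := Nat.eq_two_pow_or_exists_odd_prime_and_dvd m.natAbs
  · have hn1 : n ≤ 1 := by
      by_contra! h
      have h4 : 2 * 2 ∣ m.natAbs := by
        rw [hn]; exact pow_dvd_pow 2 h
      exact absurd (Int.squarefree_natAbs.mpr hm 2 h4) (by decide)
    have hcases : m = -1 ∨ m = 2 ∨ m = -2 := by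
      interval_cases n <;> omega
    obtain rfl | rfl | rfl := hcases
    exacts [⟨3, by decide, by norm_num⟩, ⟨3, by decide, by norm_num⟩, ⟨5, by decide, by norm_num⟩]
  · exact exists_odd_jacobiSym_eq_neg_one_of_odd_prime_dvd hp hodd hm (Int.natCast_dvd.mpr hpm)

theorem exists_prime_gt_forall_dvd_jacobiSym_eq {a : ℤ} (ha : a ≠ 0) {g : ℕ} (hg : Odd g)
    (hag : J(a | g) ≠ 0) (N : ℕ) :
    ∃ q > N, q.Prime ∧ Odd q ∧ ∀ b : ℤ, b ∣ a → J(b | q) = J(b | g) := by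
  have : NeZero g := ⟨hg.pos.ne'⟩
  have hcop : a.natAbs.Coprime g :=
    not_not.mp fun h => hag (jacobiSym.eq_zero_iff_not_coprime.mpr h)
  have hcop₄ : g.Coprime (4 * a.natAbs) :=
    ((Nat.coprime_two_right.mpr hg).pow_right 2).mul_right hcop.symm
  obtain ⟨q, hqN, hq, hqg⟩ := Nat.forall_exists_prime_gt_and_modEq (max N 2)
    (mul_ne_zero four_ne_zero (Int.natAbs_ne_zero.mpr ha)) hcop₄
  have hqodd : Odd q := hq.odd_of_ne_two ((le_max_right N 2).trans_lt hqN).ne'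
  refine ⟨q, (le_max_left N 2).trans_lt hqN, hq, hqodd, fun b hb => ?_⟩
  exact jacobiSym_eq_of_modEq hqodd hg
    (hqg.of_dvd (Nat.mul_dvd_mul_left 4 (Int.natAbs_dvd_natAbs.mpr hb)))

theorem exists_prime_gt_jacobiSym_eq_neg_one {e : ℤ} (he : ¬ IsSquare e) (N : ℕ) :
    ∃ q > N, q.Prime ∧ Odd q ∧ J(e | q) = -1 := by
  have he0 : e ≠ 0 := by rintro rfl; exact he IsSquare.zero
  obtain ⟨b, m, hb, hm, rfl⟩ := exists_sq_mul_squarefree he0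
  have hm1 : m ≠ 1 := by rintro rfl; exact he ⟨b, by ring⟩
  obtain ⟨g, hg, hgm⟩ := exists_odd_jacobiSym_eq_neg_one_of_squarefree hm hm1
  obtain ⟨q, hqN, hq, hqodd, hqg⟩ := exists_prime_gt_forall_dvd_jacobiSym_eq hm.ne_zero hg
    (by rw [hgm]; decide) (max N b.natAbs)
  have hbq : b.gcd q = 1 := (Nat.coprime_of_lt_prime (Int.natAbs_ne_zero.mpr hb)
    ((le_max_right N _).trans_lt hqN) hq).symm
  refine ⟨q, (le_max_left N _).trans_lt hqN, hq, hqodd, ?_⟩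
  rw [jacobiSym.mul_left, jacobiSym.pow_left, jacobiSym.sq_one hbq, hqg m dvd_rfl, hgm, one_mul]

theorem exists_coprime_jacobiSym_eq_neg_one_and_eq_one (S : Finset ℤ) {d : ℤ}
    (hd : ∀ T ⊆ S, ¬ IsSquare (d * ∏ a ∈ T, a)) {M : ℕ} (hM : M ≠ 0) :
    ∃ g : ℕ, Odd g ∧ g.Coprime M ∧ J(d | g) = -1 ∧ ∀ a ∈ S, J(a | g) = 1 := by
  induction S using Finset.induction_on generalizing d M with
  | empty =>
    obtain ⟨q, hqM, hq, hqodd, hqd⟩ :=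
      exists_prime_gt_jacobiSym_eq_neg_one (by simpa using hd ∅ subset_rfl) M
    exact ⟨q, hqodd, Nat.coprime_of_lt_prime hM hqM hq, hqd, by simp⟩
  | insert a S haS ih =>
    have hd₁ : ∀ T ⊆ S, ¬ IsSquare (d * ∏ b ∈ T, b) := fun T hT =>
      hd T (hT.trans (Finset.subset_insert a S))
    have hd₂ : ∀ T ⊆ S, ¬ IsSquare (d * a * ∏ b ∈ T, b) := fun T hT => by
      rw [mul_assoc, ← Finset.prod_insert (f := fun b => b) fun h => haS (hT h)]
      exact hd _ (Finset.insert_subset_insert a hT)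
    have ha : a ≠ 0 := by
      rintro rfl
      exact hd₂ ∅ (Finset.empty_subset S) (by simp)
    have hM' : M * a.natAbs ≠ 0 := mul_ne_zero hM (Int.natAbs_ne_zero.mpr ha)
    obtain ⟨g₁, hodd₁, hcop₁, hdg₁, hS₁⟩ := ih hd₁ hM'
    obtain ⟨g₂, hodd₂, hcop₂, hdg₂, hS₂⟩ := ih hd₂ hM'
    have hJa : ∀ {g : ℕ}, g.Coprime (M * a.natAbs) → J(a | g) = 1 ∨ J(a | g) = -1 := fun hg =>
      jacobiSym.eq_one_or_neg_one (Nat.coprime_comm.mp (Nat.Coprime.coprime_mul_left_right hg))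
    rw [jacobiSym.mul_left] at hdg₂
    simp only [Finset.forall_mem_insert]
    obtain ha₁ | ha₁ := hJa hcop₁
    · exact ⟨g₁, hodd₁, hcop₁.coprime_mul_right_right, hdg₁, ha₁, hS₁⟩
    obtain ha₂ | ha₂ := hJa hcop₂
    · exact ⟨g₂, hodd₂, hcop₂.coprime_mul_right_right, by simpa [ha₂] using hdg₂, ha₂, hS₂⟩
    -- Now `a` has symbol `-1` at `g₁` and at `g₂`, and `d` has symbol `-1` and `1`.
    have : NeZero g₁ := ⟨hodd₁.pos.ne'⟩
    have : NeZero g₂ := ⟨hodd₂.pos.ne'⟩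
    refine ⟨g₁ * g₂, hodd₁.mul hodd₂,
      hcop₁.coprime_mul_right_right.mul_left hcop₂.coprime_mul_right_right, ?_, ?_, ?_⟩
    · rw [jacobiSym.mul_right, hdg₁]
      rw [ha₂] at hdg₂
      linarith
    · rw [jacobiSym.mul_right, ha₁, ha₂]; rfl
    · intro b hb
      rw [jacobiSym.mul_right, hS₁ b hb, hS₂ b hb, one_mul]

theorem exists_prime_jacobiSym_eq_neg_one_and_eq_one (S : Finset ℤ) {d : ℤ}
    (hd : ∀ T ⊆ S, ¬ IsSquare (d * ∏ a ∈ T, a)) :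
    ∃ q : ℕ, q.Prime ∧ Odd q ∧ J(d | q) = -1 ∧ ∀ a ∈ S, J(a | q) = 1 := by
  obtain ⟨g, hg, -, hdg, hSg⟩ := exists_coprime_jacobiSym_eq_neg_one_and_eq_one S hd one_ne_zero
  have hprod : J(∏ a ∈ S, a | g) = 1 :=
    Finset.prod_induction _ (J(· | g) = 1)
      (fun a b ha hb => by rw [jacobiSym.mul_left, ha, hb, one_mul]) (jacobiSym.one_left g) hSg
  have h0 : d * ∏ a ∈ S, a ≠ 0 := fun h => hd S subset_rfl (h ▸ IsSquare.zero)
  obtain ⟨q, -, hq, hqodd, hqg⟩ := exists_prime_gt_forall_dvd_jacobiSym_eq h0 hg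
    (by rw [jacobiSym.mul_left, hdg, hprod]; decide) 0
  exact ⟨q, hq, hqodd, (hqg d (dvd_mul_right _ _)).trans hdg, fun a ha =>
    (hqg a ((Finset.dvd_prod_of_mem _ ha).mul_left d)).trans (hSg a ha)⟩

end JacobiSymbol

section NormForm

theorem isIntegral_of_sq_eq_intCast {A : Type*} [CommRing A] {m : ℤ} {r : A} (hr : r ^ 2 = m) :
    IsIntegral ℤ r :=
  IsIntegral.of_pow two_pos (hr ▸ isIntegral_algebraMap (R := ℤ) (A := A) (x := m))

variable {K : Type*} [Field K]

section CharZero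

variable [CharZero K]

theorem algEquiv_apply_eq_or_eq_neg_of_sq_eq_intCast {m : ℤ} {r : K} (hr : r ^ 2 = m)
    (σ : K ≃ₐ[ℚ] K) : σ r = r ∨ σ r = -r :=
  sq_eq_sq_iff_eq_or_eq_neg.mp (by rw [← map_pow, hr, map_intCast])

theorem exists_intCast_eq_of_forall_algEquiv_apply_eq [IsGalois ℚ K] {x : K} (hx : IsIntegral ℤ x)
    (h : ∀ σ : K ≃ₐ[ℚ] K, σ x = x) : ∃ n : ℤ, (n : K) = x := by
  obtain ⟨y, rfl⟩ := (InfiniteGalois.mem_bot_iff_fixed x).mpr h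
  obtain ⟨n, rfl⟩ := IsIntegrallyClosed.isIntegral_iff.mp
    ((isIntegral_algebraMap_iff (algebraMap ℚ K).injective).mp hx)
  exact ⟨n, by simp⟩

end CharZero

variable [NumberField K]

open Classical in
/-- The product of the conjugates `ρ z` over the automorphisms `ρ` that map `r` to `s`. If `s` is
conjugate to `r`, this is a conjugate of the norm of `z` from `K` to `ℚ(r)`, computed inside `K` so
that no intermediate field is needed. -/
noncomputable def partialNorm (z r s : K) : K :=
  ∏ ρ : K ≃ₐ[ℚ] K with ρ r = s, ρ z

theorem map_partialNorm (τ : K ≃ₐ[ℚ] K) (z r s : K) :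
    τ (partialNorm z r s) = partialNorm z r (τ s) := by
  rw [partialNorm, partialNorm, map_prod]
  refine Finset.prod_equiv (Equiv.mulLeft τ) (fun ρ => ?_) fun ρ _ => rfl
  simp

theorem isIntegral_partialNorm {z : K} (hz : IsIntegral ℤ z) (r s : K) :
    IsIntegral ℤ (partialNorm z r s) :=
  IsIntegral.prod _ fun ρ _ => hz.map ρ.toAlgHom.toIntAlgHom

variable [IsGalois ℚ K]

theorem norm_eq_partialNorm_mul_partialNorm {m : ℤ} (hm : m ≠ 0) {r : K} (hr : r ^ 2 = m) (z : K) :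
    algebraMap ℚ K (Algebra.norm ℚ z) = partialNorm z r r * partialNorm z r (-r) := by
  have hr0 : r ≠ 0 := by
    rintro rfl
    exact hm (by simpa using hr.symm)
  classical
  rw [Algebra.norm_eq_prod_automorphisms, partialNorm, partialNorm,
    ← Finset.prod_filter_mul_prod_filter_not _ (fun ρ : K ≃ₐ[ℚ] K => ρ r = r)]
  congr 1
  refine Finset.prod_congr (Finset.filter_congr fun ρ _ => ?_) fun _ _ => rfl
  rcases algEquiv_apply_eq_or_eq_neg_of_sq_eq_intCast hr ρ with h | h
  · simp [h, self_eq_neg.not.mpr hr0]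
  · simp [h, neg_eq_self.not.mpr hr0]

theorem exists_mul_sq_sub_four_mul_norm_eq_sq {m : ℤ} (hm : m ≠ 0) (h : IsSquare (m : K))
    (z : 𝓞 K) : ∃ A B : ℤ, m * (A ^ 2 - 4 * Algebra.norm ℤ z) = B ^ 2 := by
  obtain ⟨r, hr⟩ := (isSquare_iff_exists_sq _).mp h
  have hri : IsIntegral ℤ r := isIntegral_of_sq_eq_intCast hr.symm
  set w := partialNorm (z : K) r r with hw
  set w' := partialNorm (z : K) r (-r) with hw'
  have hwi : IsIntegral ℤ w := isIntegral_partialNorm z.isIntegral_coe _ _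
  have hwi' : IsIntegral ℤ w' := isIntegral_partialNorm z.isIntegral_coe _ _
  have hnorm : ((Algebra.norm ℤ z : ℤ) : K) = w * w' := by
    rw [← norm_eq_partialNorm_mul_partialNorm hm hr.symm, ← Algebra.coe_norm_int]
    simp
  have hconj (σ : K ≃ₐ[ℚ] K) :
      (σ r = r ∧ σ w = w ∧ σ w' = w') ∨ (σ r = -r ∧ σ w = w' ∧ σ w' = w) := by
    rw [hw, hw', map_partialNorm, map_partialNorm, map_neg]
    rcases algEquiv_apply_eq_or_eq_neg_of_sq_eq_intCast hr.symm σ with h | h <;> simp [h]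
  obtain ⟨A, hA⟩ := exists_intCast_eq_of_forall_algEquiv_apply_eq (hwi.add hwi') fun σ => by
    obtain ⟨-, h₁, h₂⟩ | ⟨-, h₁, h₂⟩ := hconj σ <;> rw [map_add, h₁, h₂]
    exact add_comm _ _
  obtain ⟨B, hB⟩ := exists_intCast_eq_of_forall_algEquiv_apply_eq (hri.mul (hwi.sub hwi'))
    fun σ => by
      obtain ⟨h₀, h₁, h₂⟩ | ⟨h₀, h₁, h₂⟩ := hconj σ <;> rw [map_mul, map_sub, h₀, h₁, h₂]
      ring
  refine ⟨A, B, Int.cast_injective (α := K) ?_⟩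
  push_cast
  rw [hnorm, hA, hB, hr]
  ring

theorem norm_nonneg_of_isSquare_of_neg {m : ℤ} (hm : m < 0) (h : IsSquare (m : K)) (z : 𝓞 K) :
    0 ≤ Algebra.norm ℤ z := by
  obtain ⟨A, B, hAB⟩ := exists_mul_sq_sub_four_mul_norm_eq_sq hm.ne h z
  nlinarith [sq_nonneg A, sq_nonneg B]

theorem exists_sq_sub_mul_sq_eq_four_mul_norm {m : ℤ} (hm : Squarefree m) (h : IsSquare (m : K))
    (z : 𝓞 K) : ∃ A B : ℤ, A ^ 2 - m * B ^ 2 = 4 * Algebra.norm ℤ z := by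
  obtain ⟨A, B, hAB⟩ := exists_mul_sq_sub_four_mul_norm_eq_sq hm.ne_zero h z
  obtain ⟨C, rfl⟩ : m ∣ B := (hm.dvd_pow_iff_dvd two_ne_zero).mp ⟨_, hAB.symm⟩
  exact ⟨A, C, mul_left_cancel₀ hm.ne_zero (by linear_combination hAB)⟩

end NormForm

section Frobenius

variable {K : Type*} [Field K] {q : ℕ}

theorem intCast_mem_iff_of_liesOver (P : Ideal (𝓞 K)) [P.LiesOver (Ideal.span {(q : ℤ)})] (n : ℤ) :
    (n : 𝓞 K) ∈ P ↔ (q : ℤ) ∣ n := by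
  rw [← Ideal.mem_span_singleton, Ideal.mem_of_liesOver P (Ideal.span {(q : ℤ)}) n, eq_intCast]

theorem pow_sub_self_mem_of_jacobiSym_eq_one (hq : q.Prime) (hodd : Odd q) (P : Ideal (𝓞 K))
    [P.LiesOver (Ideal.span {(q : ℤ)})] {m : ℤ} (hm : J(m | q) = 1) {R : 𝓞 K} (hR : R ^ 2 = m) :
    R ^ q - R ∈ P := by
  have : Fact q.Prime := ⟨hq⟩
  have hEuler : (q : ℤ) ∣ m ^ (q / 2) - 1 := by
    rw [← ZMod.intCast_zmod_eq_zero_iff_dvd]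
    push_cast
    rw [← legendreSym.eq_pow, jacobiSym.legendreSym.to_jacobiSym, hm, Int.cast_one, sub_self]
  have hfactor : R ^ q - R = R * ((m ^ (q / 2) - 1 : ℤ) : 𝓞 K) := by
    nth_rw 1 [← Nat.two_mul_div_two_add_one_of_odd hodd]
    push_cast
    rw [← hR]
    ring
  rw [hfactor]
  exact P.mul_mem_left R ((intCast_mem_iff_of_liesOver P _).mpr hEuler)

variable [NumberField K]

theorem exists_isMaximal_liesOver_and_frobenius [IsGalois ℚ K] (hq : q.Prime) :
    ∃ P : Ideal (𝓞 K), P.IsMaximal ∧ P.LiesOver (Ideal.span {(q : ℤ)}) ∧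
      ∃ σ : K ≃ₐ[ℚ] K, ∀ x : 𝓞 K, σ • x - x ^ q ∈ P := by
  have hq0 : (q : ℤ) ≠ 0 := by exact_mod_cast hq.ne_zero
  have : (Ideal.span {(q : ℤ)}).IsMaximal :=
    PrincipalIdealRing.isMaximal_of_irreducible (Nat.prime_iff_prime_int.mp hq).irreducible
  obtain ⟨P, hPmax, hP⟩ :=
    Ideal.exists_maximal_ideal_liesOver_of_isIntegral (S := 𝓞 K) (Ideal.span {(q : ℤ)})
  have hP0 : P ≠ ⊥ :=
    Ideal.ne_bot_of_liesOver_of_ne_bot (p := Ideal.span {(q : ℤ)}) (by simpa using hq0) P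
  have : Finite (𝓞 K ⧸ P) := Ideal.finiteQuotientOfFreeOfNeBot P hP0
  obtain ⟨σ, hσ⟩ := IsArithFrobAt.exists_of_isInvariant ℤ (K ≃ₐ[ℚ] K) P
  have hcard : Nat.card (ℤ ⧸ P.under ℤ) = q := by
    rw [← P.over_def (Ideal.span {(q : ℤ)}), ← Submodule.cardQuot_apply, ← Ideal.absNorm_apply,
      Ideal.absNorm_span_singleton]
    simp
  exact ⟨P, hPmax, hP, σ, fun x => hcard ▸ hσ x⟩

theorem frobenius_apply_sqrt_eq (hq : q.Prime) (hodd : Odd q) {P : Ideal (𝓞 K)}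
    [P.LiesOver (Ideal.span {(q : ℤ)})] {σ : K ≃ₐ[ℚ] K}
    (hσ : ∀ x : 𝓞 K, σ • x - x ^ q ∈ P) {m : ℤ} (hm : J(m | q) = 1) {r : K} (hr : r ^ 2 = m) :
    σ r = r := by
  have : Fact q.Prime := ⟨hq⟩
  obtain ⟨R, rfl⟩ : ∃ R : 𝓞 K, (R : K) = r := ⟨⟨r, isIntegral_of_sq_eq_intCast hr⟩, rfl⟩
  have hR : R ^ 2 = m := RingOfIntegers.ext (by simpa using hr)
  have hpow : R ^ q - R ∈ P := pow_sub_self_mem_of_jacobiSym_eq_one hq hodd P hm hR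
  refine (algEquiv_apply_eq_or_eq_neg_of_sq_eq_intCast hr σ).resolve_right fun h => ?_
  have hneg : σ • R = -R := RingOfIntegers.ext h
  have h4m : ((4 * m : ℤ) : 𝓞 K) ∈ P := by
    have : ((4 * m : ℤ) : 𝓞 K) = -2 * R * ((σ • R - R ^ q) + (R ^ q - R)) := by
      rw [hneg]
      push_cast
      rw [← hR]
      ring
    rw [this]
    exact P.mul_mem_left _ (P.add_mem (hσ R) hpow)
  have hm0 : ¬ (q : ℤ) ∣ m := fun h => by
    rw [← ZMod.intCast_zmod_eq_zero_iff_dvd] at h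
    rw [← jacobiSym.legendreSym.to_jacobiSym, (legendreSym.eq_zero_iff q m).mpr h] at hm
    exact zero_ne_one hm
  have hq4 : (q : ℤ).gcd (4 : ℤ) = 1 := (Nat.coprime_two_right.mpr hodd).pow_right 2
  exact hm0 (Int.dvd_of_dvd_mul_right_of_gcd_one ((intCast_mem_iff_of_liesOver P _).mp h4m) hq4)

theorem absNorm_eq_of_forall_sub_pow_mem (hq : q.Prime) (P : Ideal (𝓞 K)) [P.IsMaximal]
    [P.LiesOver (Ideal.span {(q : ℤ)})] (h : ∀ x : 𝓞 K, x - x ^ q ∈ P) : Ideal.absNorm P = q := by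
  have : Fact q.Prime := ⟨hq⟩
  let := Ideal.Quotient.field P
  have : CharP (𝓞 K ⧸ P) q := (CharP.charP_iff_prime_eq_zero hq).mpr <| by
    rw [← map_natCast (Ideal.Quotient.mk P), Ideal.Quotient.eq_zero_iff_mem]
    exact_mod_cast (intCast_mem_iff_of_liesOver P q).mpr dvd_rfl
  have htop : (⊥ : Subfield (𝓞 K ⧸ P)) = ⊤ := by
    rw [eq_top_iff]
    rintro x -
    obtain ⟨x, rfl⟩ := Ideal.Quotient.mk_surjective x
    rw [Subfield.mem_bot_iff_pow_eq_self (F := 𝓞 K ⧸ P) (p := q), ← map_pow, eq_comm,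
      Ideal.Quotient.eq]
    exact h x
  rw [Ideal.absNorm_apply, Submodule.cardQuot_apply, ← Subfield.card_bot (𝓞 K ⧸ P) q, htop]
  exact (Nat.card_congr Subfield.topEquiv.toEquiv).symm

/-- The number field `K` is multiquadratic: it contains the square roots of the squarefree integers
in `S` and is generated by them. -/
structure IsMultiquadratic (K : Type*) [Field K] [NumberField K] (S : Finset ℤ) : Prop where
  squarefree : ∀ m ∈ S, Squarefree m
  isSquare : ∀ m ∈ S, IsSquare (m : K)
  adjoin_eq_top : IntermediateField.adjoin ℚ {r : K | ∃ m ∈ S, r ^ 2 = m} = ⊤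

theorem IsMultiquadratic.exists_absNorm_eq [IsGalois ℚ K] {S : Finset ℤ} (hS : IsMultiquadratic K S)
    (hq : q.Prime) (hodd : Odd q) (h : ∀ m ∈ S, J(m | q) = 1) :
    ∃ P : Ideal (𝓞 K), Ideal.absNorm P = q := by
  obtain ⟨P, hPmax, hP, σ, hσ⟩ := exists_isMaximal_liesOver_and_frobenius (K := K) hq
  have hσ1 : σ = 1 := by
    ext x
    refine (IntermediateField.forall_mem_adjoin_smul_eq_self_iff ℚ σ).mpr ?_ x
      (hS.adjoin_eq_top ▸ IntermediateField.mem_top)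
    rintro r ⟨m, hm, hr⟩
    exact frobenius_apply_sqrt_eq hq hodd hσ (h m hm) hr
  refine ⟨P, absNorm_eq_of_forall_sub_pow_mem hq P fun x => ?_⟩
  simpa only [hσ1, one_smul] using hσ x

end Frobenius

section Multiquadratic

theorem exists_sq_mul_squarefree_rat {a : ℚ} (ha : a ≠ 0) :
    ∃ (c : ℚ) (m : ℤ), c ≠ 0 ∧ Squarefree m ∧ c ^ 2 * m = a := by
  have hden : (a.den : ℚ) ≠ 0 := Nat.cast_ne_zero.mpr a.den_nz
  obtain ⟨b, m, hb, hm, hbm⟩ := exists_sq_mul_squarefree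
    (mul_ne_zero (Rat.num_ne_zero.mpr ha) (Int.natCast_ne_zero.mpr a.den_nz))
  have hbm' : (b : ℚ) ^ 2 * m = a.num * a.den := by exact_mod_cast hbm
  refine ⟨b / a.den, m, div_ne_zero (Int.cast_ne_zero.mpr hb) hden, hm, ?_⟩
  calc (b / a.den : ℚ) ^ 2 * m = b ^ 2 * m / a.den ^ 2 := by ring
    _ = (a.num : ℚ) / a.den := by rw [hbm']; field_simp
    _ = a := a.num_div_den

variable {K : Type*} [Field K]

section CharZero

variable [CharZero K]

theorem mem_span_setOf_forall_apply_eq_or_eq_neg (hG : ∀ σ : K ≃ₐ[ℚ] K, σ ^ 2 = 1)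
    (T : Finset (K ≃ₐ[ℚ] K)) (x : K) :
    x ∈ Submodule.span ℚ {r : K | ∀ σ ∈ T, σ r = r ∨ σ r = -r} := by
  classical
  induction T using Finset.induction_on with
  | empty => exact Submodule.subset_span (by simp)
  | insert ρ T _ ih =>
    refine Submodule.span_le.mpr (fun r hr => ?_) ih
    have hρ : ρ (ρ r) = r := DFunLike.congr_fun ((sq ρ).symm.trans (hG ρ)) r
    have hcomm (σ : K ≃ₐ[ℚ] K) : σ (ρ r) = ρ (σ r) :=
      DFunLike.congr_fun
        (Commute.of_orderOf_dvd_two (fun σ => orderOf_dvd_of_pow_eq_one (hG σ)) σ ρ) r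
    have hsplit : r = (2⁻¹ : ℚ) • (r + ρ r) + (2⁻¹ : ℚ) • (r - ρ r) := by
      rw [← smul_add, add_add_sub_cancel, ← two_smul ℚ r, inv_smul_smul₀ two_ne_zero]
    rw [SetLike.mem_coe, hsplit]
    refine Submodule.add_mem _ (Submodule.smul_mem _ _ (Submodule.subset_span ?_))
      (Submodule.smul_mem _ _ (Submodule.subset_span ?_)) <;>
    refine Finset.forall_mem_insert .. |>.mpr ⟨?_, fun σ hσ => ?_⟩
    · exact .inl (by rw [map_add, hρ, add_comm])
    · rw [map_add, hcomm]
      exact (hr σ hσ).imp (fun h => by rw [h]) fun h => by rw [h, map_neg]; ring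
    · exact .inr (by rw [map_sub, hρ, neg_sub])
    · rw [map_sub, hcomm]
      exact (hr σ hσ).imp (fun h => by rw [h]) fun h => by rw [h, map_neg]; ring

theorem exists_eq_smul_sqrt_of_forall_apply_eq_or_eq_neg [IsGalois ℚ K] {r : K}
    (hr : ∀ σ : K ≃ₐ[ℚ] K, σ r = r ∨ σ r = -r) :
    ∃ (m : ℤ) (s : K) (c : ℚ), Squarefree m ∧ s ^ 2 = m ∧ r = c • s := by
  obtain rfl | hr0 := eq_or_ne r 0
  · exact ⟨1, 1, 0, squarefree_one, by simp, by simp⟩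
  obtain ⟨a, ha⟩ : ∃ a : ℚ, algebraMap ℚ K a = r ^ 2 :=
    (InfiniteGalois.mem_bot_iff_fixed _).mpr fun σ => by
      rw [map_pow]
      exact sq_eq_sq_iff_eq_or_eq_neg.mpr (hr σ)
  have ha0 : a ≠ 0 := by
    rintro rfl
    exact hr0 (by simpa using ha.symm)
  obtain ⟨c, m, hc, hm, rfl⟩ := exists_sq_mul_squarefree_rat ha0
  refine ⟨m, c⁻¹ • r, c, hm, ?_, (smul_inv_smul₀ hc r).symm⟩
  rw [smul_pow, ← ha, Algebra.algebraMap_eq_smul_one, smul_smul, inv_pow,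
    inv_mul_cancel_left₀ (pow_ne_zero 2 hc)]
  simp [Algebra.smul_def]

end CharZero

variable [NumberField K]

theorem exists_isMultiquadratic [IsGalois ℚ K] (hG : ∀ σ : K ≃ₐ[ℚ] K, σ ^ 2 = 1) :
    ∃ S : Finset ℤ, IsMultiquadratic K S := by
  obtain ⟨R, hR, hspan⟩ := (Submodule.fg_span_iff_fg_span_finset_subset (R := ℚ)
    {r : K | ∀ σ ∈ (Finset.univ : Finset (K ≃ₐ[ℚ] K)), σ r = r ∨ σ r = -r}).mp
      (IsNoetherian.noetherian _)
  rw [Submodule.eq_top_iff'.mpr (mem_span_setOf_forall_apply_eq_or_eq_neg hG _)] at hspan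
  have hsqrt (r : R) : ∃ (m : ℤ) (s : K) (c : ℚ), Squarefree m ∧ s ^ 2 = m ∧ (r : K) = c • s :=
    exists_eq_smul_sqrt_of_forall_apply_eq_or_eq_neg fun σ => hR r.2 σ (Finset.mem_univ σ)
  choose m s c hm hs hc using hsqrt
  refine ⟨Finset.univ.image m, ?_, ?_, ?_⟩
  · exact Finset.forall_mem_image.mpr fun r _ => hm r
  · exact Finset.forall_mem_image.mpr fun r _ => ⟨s r, by rw [← sq, hs]⟩
  · rw [eq_top_iff]
    intro x _
    have hx : x ∈ Submodule.span ℚ (R : Set K) := hspan ▸ Submodule.mem_top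
    refine (Submodule.span_le (p := (IntermediateField.adjoin ℚ _).toSubalgebra.toSubmodule)).mpr
      (fun r hr => ?_) hx
    have hsr : s ⟨r, hr⟩ ∈ {r : K | ∃ n ∈ Finset.univ.image m, r ^ 2 = n} :=
      ⟨m ⟨r, hr⟩, Finset.mem_image_of_mem m (Finset.mem_univ _), hs _⟩
    rw [show r = _ from hc ⟨r, hr⟩]
    exact IntermediateField.smul_mem _ (IntermediateField.subset_adjoin ℚ _ hsr)

end Multiquadratic

section Genus

variable {K : Type*} [Field K] [NumberField K]

theorem exists_pow_eq_span_singleton {u : ℕ} (hE : Monoid.exponent (ClassGroup (𝓞 K)) ∣ u)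
    {I : Ideal (𝓞 K)} (hI : I ≠ ⊥) : ∃ α : 𝓞 K, I ^ u = Ideal.span {α} := by
  have h := Monoid.exponent_dvd_iff_forall_pow_eq_one.mp hE
    (ClassGroup.mk0 ⟨I, mem_nonZeroDivisors_of_ne_zero hI⟩)
  rw [← map_pow, ClassGroup.mk0_eq_one_iff] at h
  obtain ⟨α, hα⟩ := h
  exact ⟨α, hα⟩

theorem exists_norm_eq_absNorm_pow {u : ℕ} (hE : Monoid.exponent (ClassGroup (𝓞 K)) ∣ u)
    (hnorm : ∀ z : 𝓞 K, 0 ≤ Algebra.norm ℤ z) {I : Ideal (𝓞 K)} (hI : I ≠ ⊥) :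
    ∃ α : 𝓞 K, Algebra.norm ℤ α = Ideal.absNorm I ^ u := by
  obtain ⟨α, hα⟩ := exists_pow_eq_span_singleton hE hI
  refine ⟨α, ?_⟩
  have h := congrArg Ideal.absNorm hα
  rw [map_pow, Ideal.absNorm_span_singleton] at h
  rw [← Int.natAbs_of_nonneg (hnorm α), ← h, Nat.cast_pow]

theorem not_isSquare_mul_prod_of_not_isSquare_cast {S : Finset ℤ} (hS₀ : ∀ m ∈ S, m ≠ 0)
    (hS : ∀ m ∈ S, IsSquare (m : K)) {d : ℤ} (hd : ¬ IsSquare (d : K)) {T : Finset ℤ} (hT : T ⊆ S) :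
    ¬ IsSquare (d * ∏ m ∈ T, m) := by
  intro h
  have hprod : IsSquare ((∏ m ∈ T, m : ℤ) : K) := by
    rw [Int.cast_prod]
    exact Finset.isSquare_prod _ fun m hm => hS m (hT hm)
  have hprod₀ : ((∏ m ∈ T, m : ℤ) : K) ≠ 0 :=
    Int.cast_ne_zero.mpr (Finset.prod_ne_zero_iff.mpr fun m hm => hS₀ m (hT hm))
  refine hd ?_
  rw [← mul_div_cancel_right₀ (d : K) hprod₀, ← Int.cast_mul]
  exact (h.map (Int.castRingHom K)).div hprod

theorem IsMultiquadratic.exists_prime_forall_sq_sub_mul_sq_eq [IsGalois ℚ K] {S : Finset ℤ}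
    (hS : IsMultiquadratic K S) {u : ℕ} (hE : Monoid.exponent (ClassGroup (𝓞 K)) ∣ u)
    (hnorm : ∀ z : 𝓞 K, 0 ≤ Algebra.norm ℤ z) {d : ℤ} (hd : ¬ IsSquare (d : K)) :
    ∃ q : ℕ, q.Prime ∧ Odd q ∧ J(d | q) = -1 ∧
      ∀ m : ℤ, Squarefree m → IsSquare (m : K) → ∃ A B : ℤ, A ^ 2 - m * B ^ 2 = 4 * q ^ u := by
  obtain ⟨q, hq, hodd, hqd, hqS⟩ := exists_prime_jacobiSym_eq_neg_one_and_eq_one S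
    (fun T hT => not_isSquare_mul_prod_of_not_isSquare_cast
      (fun m hm => (hS.squarefree m hm).ne_zero) hS.isSquare hd hT)
  obtain ⟨P, hP⟩ := hS.exists_absNorm_eq hq hodd hqS
  have hP₀ : P ≠ ⊥ := by
    rintro rfl
    exact hq.ne_zero (by rw [← hP, Ideal.absNorm_bot])
  obtain ⟨α, hα⟩ := exists_norm_eq_absNorm_pow hE hnorm hP₀
  refine ⟨q, hq, hodd, hqd, fun m hm hmK => ?_⟩
  rw [← hP, ← hα]
  exact exists_sq_sub_mul_sq_eq_four_mul_norm hm hmK α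

end Genus

section LocalConditions

/-- The number `p* = (-1) ^ ((p - 1) / 2) * p` attached to an odd prime `p`: the sign makes it
congruent to `1` modulo `4`. These are the odd prime discriminants. -/
def primeStar (p : ℕ) : ℤ := (-1) ^ ((p - 1) / 2) * p

theorem natAbs_primeStar (p : ℕ) : (primeStar p).natAbs = p := by
  simp [primeStar, Int.natAbs_mul, Int.natAbs_pow]

theorem primeStar_modEq_one {p : ℕ} (hp : Odd p) : primeStar p ≡ 1 [ZMOD 4] := by
  obtain ⟨k, rfl⟩ := hp
  obtain ⟨j, rfl | rfl⟩ := k.even_or_odd'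
  · have hexp : (2 * (2 * j) + 1 - 1) / 2 = 2 * j := by omega
    exact Int.modEq_iff_dvd.mpr ⟨-j, by rw [primeStar, hexp, pow_mul]; push_cast; ring⟩
  · have hexp : (2 * (2 * j + 1) + 1 - 1) / 2 = 2 * j + 1 := by omega
    exact Int.modEq_iff_dvd.mpr
      ⟨j + 1, by rw [primeStar, hexp, pow_succ, pow_mul]; push_cast; ring⟩

theorem jacobiSym_primeStar {p q : ℕ} (hp : Odd p) (hq : Odd q) :
    J(primeStar p | q) = J(q | p) := by
  have hhalf : (p - 1) / 2 = p / 2 := by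
    obtain ⟨k, rfl⟩ := hp
    omega
  have hsign : J((-1) ^ ((p - 1) / 2) | q) = (-1) ^ (p / 2 * (q / 2)) := by
    rw [jacobiSym.pow_left, jacobiSym.at_neg_one hq, ZMod.χ₄_eq_neg_one_pow (Nat.odd_iff.mp hq),
      ← pow_mul, hhalf, mul_comm]
  rw [primeStar, jacobiSym.mul_left, hsign, jacobiSym.quadratic_reciprocity hp hq, ← mul_assoc,
    ← mul_pow, neg_one_mul, neg_neg, one_pow, one_mul]

variable {m A B : ℤ} {q u : ℕ}

theorem jacobiSym_primeStar_ne_neg_one {p : ℕ} (hp : Odd p) (hq : Odd q) (hpm : (p : ℤ) ∣ m)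
    (hu : Odd u) (h : A ^ 2 - m * B ^ 2 = 4 * q ^ u) : J(primeStar p | q) ≠ -1 := by
  rw [jacobiSym_primeStar hp hq]
  intro hJ
  have h2 : (2 : ℤ).gcd p = 1 := Nat.coprime_two_left.mpr hp
  have hmod : A ^ 2 ≡ 2 ^ 2 * q ^ u [ZMOD p] := by
    refine (Int.modEq_iff_dvd.mpr ?_).symm
    rw [show A ^ 2 - 2 ^ 2 * (q : ℤ) ^ u = m * B ^ 2 by linear_combination h]
    exact hpm.mul_right _
  have hneg : J(A ^ 2 | p) = -1 := by
    rw [jacobiSym.mod_left, hmod, ← jacobiSym.mod_left, jacobiSym.mul_left, jacobiSym.sq_one' h2,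
      jacobiSym.pow_left, hJ, hu.neg_one_pow, one_mul]
  rw [jacobiSym.pow_left] at hneg
  linarith [sq_nonneg J(A | p)]

theorem exists_sq_sub_mul_sq_eq_of_eq_four_mul {n : ℤ} (hm : m % 4 = 2 ∨ m % 4 = 3)
    (h : A ^ 2 - m * B ^ 2 = 4 * n) : ∃ x y : ℤ, x ^ 2 - m * y ^ 2 = n := by
  have hm4 : (m : ZMod 4) = 2 ∨ (m : ZMod 4) = 3 :=
    hm.imp (fun h => by rw [← Int.cast_ofNat, ZMod.intCast_eq_intCast_iff]; exact h)
      fun h => by rw [← Int.cast_ofNat, ZMod.intCast_eq_intCast_iff]; exact h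
  have key : ∀ a b c : ZMod 4, c = 2 ∨ c = 3 → a ^ 2 - c * b ^ 2 = 0 → 2 * a = 0 ∧ 2 * b = 0 := by
    decide
  have h4 : ((A ^ 2 - m * B ^ 2 : ℤ) : ZMod 4) = 0 :=
    (ZMod.intCast_zmod_eq_zero_iff_dvd _ 4).mpr ⟨n, h⟩
  push_cast at h4
  obtain ⟨hA, hB⟩ := key A B m hm4 h4
  have htwo : ∀ {x : ℤ}, 2 * (x : ZMod 4) = 0 → ∃ y, x = 2 * y := fun {x} hx => by
    have : (4 : ℤ) ∣ 2 * x := (ZMod.intCast_zmod_eq_zero_iff_dvd _ 4).mp (by exact_mod_cast hx)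
    exact ⟨x / 2, by omega⟩
  obtain ⟨x, rfl⟩ := htwo hA
  obtain ⟨y, rfl⟩ := htwo hB
  exact ⟨x, y, by linarith⟩

theorem mulChar_natCast_ne_neg_one {N : ℕ} (χ : MulChar (ZMod N) ℤ) {c : ZMod N}
    (hc : (m : ZMod N) = c) (hχ : ∀ x y : ZMod N, χ (x ^ 2 - c * y ^ 2) ≠ -1)
    (hm : m % 4 = 2 ∨ m % 4 = 3) (hu : Odd u) (h : A ^ 2 - m * B ^ 2 = 4 * q ^ u) : χ q ≠ -1 := by
  intro hq
  obtain ⟨x, y, hxy⟩ := exists_sq_sub_mul_sq_eq_of_eq_four_mul hm h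
  refine hχ x y ?_
  have : ((x ^ 2 - m * y ^ 2 : ℤ) : ZMod N) = q ^ u := by rw [hxy]; push_cast; rfl
  push_cast at this
  rw [← hc, this, map_pow, hq, hu.neg_one_pow]

theorem jacobiSym_neg_one_ne_neg_one (hm : m % 4 = 3) (hu : Odd u) (hq : Odd q)
    (h : A ^ 2 - m * B ^ 2 = 4 * q ^ u) : J(-1 | q) ≠ -1 := by
  rw [jacobiSym.at_neg_one hq]
  exact mulChar_natCast_ne_neg_one ZMod.χ₄ ((ZMod.intCast_eq_intCast_iff m 3 4).mpr hm) (by decide)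
    (.inr hm) hu h

theorem jacobiSym_two_ne_neg_one (hm : m % 8 = 2) (hu : Odd u) (hq : Odd q)
    (h : A ^ 2 - m * B ^ 2 = 4 * q ^ u) : J(2 | q) ≠ -1 := by
  rw [jacobiSym.at_two hq]
  exact mulChar_natCast_ne_neg_one ZMod.χ₈ ((ZMod.intCast_eq_intCast_iff m 2 8).mpr hm) (by decide)
    (.inl (by omega)) hu h

theorem jacobiSym_neg_two_ne_neg_one (hm : m % 8 = 6) (hu : Odd u) (hq : Odd q)
    (h : A ^ 2 - m * B ^ 2 = 4 * q ^ u) : J(-2 | q) ≠ -1 := by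
  rw [jacobiSym.at_neg_two hq]
  exact mulChar_natCast_ne_neg_one ZMod.χ₈' ((ZMod.intCast_eq_intCast_iff m 6 8).mpr hm)
    (by decide) (.inl (by omega)) hu h

end LocalConditions

section PrincipalGenus

theorem exists_eq_mul_prod_primeStar {m : ℤ} (hm : Squarefree m) :
    ∃ ε : ℤ, (ε = 1 ∨ ε = -1 ∨ ε = 2 ∨ ε = -2) ∧
      m = ε * ∏ p ∈ m.natAbs.primeFactors.erase 2, primeStar p := by
  set P := ∏ p ∈ m.natAbs.primeFactors.erase 2, primeStar p with hP
  have hPabs : P.natAbs = ∏ p ∈ m.natAbs.primeFactors.erase 2, p := by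
    rw [hP, ← Int.natAbsHom_apply, map_prod]
    exact Finset.prod_congr rfl fun p _ => natAbs_primeStar p
  have hm' : ∏ p ∈ m.natAbs.primeFactors, p = m.natAbs :=
    Nat.prod_primeFactors_of_squarefree (Int.squarefree_natAbs.mpr hm)
  by_cases h2 : 2 ∈ m.natAbs.primeFactors
  · rw [← Finset.mul_prod_erase _ _ h2, ← hPabs] at hm'
    obtain h | h : m = 2 * P ∨ m = -2 * P := by omega
    · exact ⟨2, by simp, h⟩
    · exact ⟨-2, by simp, h⟩
  · rw [← Finset.erase_eq_of_notMem h2, ← hPabs] at hm'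
    obtain h | h : m = 1 * P ∨ m = -1 * P := by omega
    · exact ⟨1, by simp, h⟩
    · exact ⟨-1, by simp, h⟩

theorem prod_primeStar_modEq_one {s : Finset ℕ} (hs : ∀ p ∈ s, Odd p) :
    ∏ p ∈ s, primeStar p ≡ 1 [ZMOD 4] :=
  Finset.prod_induction _ (· ≡ 1 [ZMOD 4]) (fun _ _ ha hb => ha.mul hb) rfl
    fun p hp => primeStar_modEq_one (hs p hp)

theorem pstar_primeStar {p : ℕ} (hp : p.Prime) (hodd : Odd p) : Pstar (primeStar p) :=
  .inr (.inr (.inr ⟨p, hp, hodd, rfl⟩))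

theorem isSquare_intCast_four_mul_iff {F : Type*} [Field F] [CharZero F] {m : ℤ} :
    IsSquare ((4 * m : ℤ) : F) ↔ IsSquare (m : F) := by
  have hfour : IsSquare (4 : F) := ⟨2, by norm_num⟩
  refine ⟨fun h => ?_, fun h => ?_⟩
  · rw [← mul_div_cancel_left₀ (m : F) (OfNat.ofNat_ne_zero (R := F) 4)]
    push_cast at h
    exact h.div hfour
  · push_cast
    exact hfour.mul h

variable {K : Type*} [Field K] [NumberField K] [IsGalois ℚ K] {S : Finset ℤ} {u : ℕ} {m : ℤ}

theorem IsMultiquadratic.isSquare_of_forall_jacobiSym_ne_neg_one (hS : IsMultiquadratic K S)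
    (hE : Monoid.exponent (ClassGroup (𝓞 K)) ∣ u) (hnorm : ∀ z : 𝓞 K, 0 ≤ Algebra.norm ℤ z)
    (hm : Squarefree m) (hmK : IsSquare (m : K)) {d : ℤ}
    (h : ∀ {q : ℕ} {A B : ℤ}, Odd q → A ^ 2 - m * B ^ 2 = 4 * q ^ u → J(d | q) ≠ -1) :
    IsSquare (d : K) := by
  by_contra hd
  obtain ⟨q, -, hq, hqd, hqm⟩ := hS.exists_prime_forall_sq_sub_mul_sq_eq hE hnorm hd
  obtain ⟨A, B, hAB⟩ := hqm m hm hmK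
  exact h hq hAB hqd

theorem IsMultiquadratic.isSquare_of_forall_pstar (hS : IsMultiquadratic K S) (hu : Odd u)
    (hE : Monoid.exponent (ClassGroup (𝓞 K)) ∣ u) (hnorm : ∀ z : 𝓞 K, 0 ≤ Algebra.norm ℤ z)
    (hm : Squarefree m) (hmK : IsSquare (m : K)) {F : Type*} [Field F] [CharZero F]
    (hF : ∀ d : ℤ, Pstar d → IsSquare (d : K) → IsSquare (d : F)) : IsSquare (m : F) := by
  have hK {d : ℤ} (h : ∀ {q : ℕ} {A B : ℤ}, Odd q → A ^ 2 - m * B ^ 2 = 4 * q ^ u →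
      J(d | q) ≠ -1) : IsSquare (d : K) :=
    hS.isSquare_of_forall_jacobiSym_ne_neg_one hE hnorm hm hmK h
  have hfour {d : ℤ} (hd : Pstar (4 * d)) (hdK : IsSquare (d : K)) : IsSquare (d : F) :=
    isSquare_intCast_four_mul_iff.mp (hF _ hd (isSquare_intCast_four_mul_iff.mpr hdK))
  obtain ⟨ε, hε, hmε⟩ := exists_eq_mul_prod_primeStar hm
  set s := m.natAbs.primeFactors.erase 2
  have hs : ∀ p ∈ s, p.Prime ∧ Odd p ∧ (p : ℤ) ∣ m := fun p hp => by
    obtain ⟨h2, hp⟩ := Finset.mem_erase.mp hp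
    have hprime := Nat.prime_of_mem_primeFactors hp
    exact ⟨hprime, hprime.odd_of_ne_two h2, Int.natCast_dvd.mpr (Nat.dvd_of_mem_primeFactors hp)⟩
  have hprod : (∏ p ∈ s, primeStar p) % 4 = 1 :=
    prod_primeStar_modEq_one fun p hp => (hs p hp).2.1
  have hsF : IsSquare ((∏ p ∈ s, primeStar p : ℤ) : F) := by
    rw [Int.cast_prod]
    exact Finset.isSquare_prod _ fun p hp =>
      hF _ (pstar_primeStar (hs p hp).1 (hs p hp).2.1)
        (hK fun hq => jacobiSym_primeStar_ne_neg_one (hs p hp).2.1 hq (hs p hp).2.2 hu)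
  have hεF : IsSquare (ε : F) := by
    obtain rfl | rfl | rfl | rfl := hε
    · simp
    · exact hfour (.inr (.inl rfl)) (hK fun hq => jacobiSym_neg_one_ne_neg_one (by omega) hu hq)
    · exact hfour (.inl rfl) (hK fun hq => jacobiSym_two_ne_neg_one (by omega) hu hq)
    · exact hfour (.inr (.inr (.inl rfl)))
        (hK fun hq => jacobiSym_neg_two_ne_neg_one (by omega) hu hq)
  rw [hmε, Int.cast_mul]
  exact hεF.mul hsF

theorem IsMultiquadratic.le_of_forall_isSquare {L : Type*} [Field L] [CharZero L]
    {K F : IntermediateField ℚ L} [NumberField K] {S : Finset ℤ} (hS : IsMultiquadratic K S)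
    (hF : ∀ m ∈ S, IsSquare (m : F)) : K ≤ F := by
  have hgen : ∀ r ∈ {r : K | ∃ m ∈ S, r ^ 2 = m}, (r : L) ∈ F := by
    rintro r ⟨m, hmS, hr⟩
    obtain ⟨s, hs⟩ := (isSquare_iff_exists_sq _).mp (hF m hmS)
    have hrs : (r : L) ^ 2 = (s : L) ^ 2 := by
      rw [← IntermediateField.coe_pow, ← IntermediateField.coe_pow, hr, ← hs]
      simp
    obtain h | h := sq_eq_sq_iff_eq_or_eq_neg.mp hrs <;> rw [h]
    · exact s.2
    · exact F.neg_mem s.2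
  suffices ∀ x : K, (x : L) ∈ F from fun x hx => this ⟨x, hx⟩
  intro x
  have hxS : x ∈ IntermediateField.adjoin ℚ {r : K | ∃ m ∈ S, r ^ 2 = m} :=
    hS.adjoin_eq_top ▸ IntermediateField.mem_top
  induction hxS using IntermediateField.adjoin_induction with
  | mem r hr => exact hgen r hr
  | algebraMap q => simp
  | add a b _ _ ha hb => simpa using F.add_mem ha hb
  | inv a _ ha => simpa using F.inv_mem ha
  | mul a b _ _ ha hb => simpa using F.mul_mem ha hb

theorem IsMultiquadratic.exists_pstar_isSquare_and_not_isSquare {L : Type*} [Field L] [CharZero L]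
    {K F : IntermediateField ℚ L} [NumberField K] [IsGalois ℚ K] {S : Finset ℤ}
    (hS : IsMultiquadratic K S) (hu : Odd u) (hE : Monoid.exponent (ClassGroup (𝓞 K)) ∣ u)
    (hnorm : ∀ z : 𝓞 K, 0 ≤ Algebra.norm ℤ z) (hKF : ¬ K ≤ F) :
    ∃ d : ℤ, Pstar d ∧ IsSquare (d : K) ∧ ¬ IsSquare (d : F) := by
  by_contra! h
  exact hKF <| hS.le_of_forall_isSquare fun m hm =>
    hS.isSquare_of_forall_pstar hu hE hnorm (hS.squarefree m hm) (hS.isSquare m hm) h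

end PrincipalGenus

section RankTwo

variable {R A : Type*} [CommRing R] [Nontrivial R] [CommRing A] [Algebra R A] [Module.Free R A]
  [Module.Finite R A]

theorem sq_eq_trace_mul_sub_norm (hA : Module.finrank R A = 2) (z : A) :
    z ^ 2 = algebraMap R A (Algebra.trace R A z) * z - algebraMap R A (Algebra.norm R z) := by
  let b := Module.finBasisOfFinrankEq R A hA
  have h := Matrix.aeval_self_charpoly (Algebra.leftMulMatrix b z)
  rw [Matrix.charpoly_fin_two, ← Algebra.trace_eq_matrix_trace, ← Algebra.norm_eq_matrix_det] at h
  apply Algebra.leftMulMatrix_injective b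
  simp only [map_sub, map_add, map_mul, map_pow, Polynomial.aeval_X, Polynomial.aeval_C,
    AlgHom.commutes] at h ⊢
  rwa [add_eq_zero_iff_eq_neg, sub_eq_iff_eq_add, neg_add_eq_sub] at h

theorem trace_sq_eq_sq_trace_sub_two_mul_norm (hA : Module.finrank R A = 2) (z : A) :
    Algebra.trace R A (z ^ 2) = Algebra.trace R A z ^ 2 - 2 * Algebra.norm R z := by
  have h := congrArg (Algebra.trace R A) (sq_eq_trace_mul_sub_norm hA z)
  rw [map_sub, ← Algebra.smul_def, map_smul, Algebra.trace_algebraMap, hA] at h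
  simpa [sq] using h

theorem mul_two_mul_sub_trace (hA : Module.finrank R A = 2) (z w : A) :
    z * (2 * w - algebraMap R A (Algebra.trace R A w)) =
      algebraMap R A (Algebra.trace R A (z * w)) - algebraMap R A (Algebra.trace R A z) *
        (algebraMap R A (Algebra.trace R A w) - w) := by
  let b := Module.finBasisOfFinrankEq R A hA
  suffices z * w + w * z - z * algebraMap R A (Algebra.trace R A w) =
      algebraMap R A (Algebra.trace R A (z * w)) - algebraMap R A (Algebra.trace R A z) *
        (algebraMap R A (Algebra.trace R A w) - w) by linear_combination this
  apply Algebra.leftMulMatrix_injective b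
  simp only [map_sub, map_add, map_mul, AlgHom.commutes, Algebra.trace_eq_matrix_trace b]
  ext i j
  fin_cases i <;> fin_cases j <;>
    simp [Matrix.mul_apply, Fin.sum_univ_two, Matrix.trace_fin_two, Matrix.algebraMap_matrix_apply]
      <;> ring

end RankTwo

section Unramified

variable {A : Type*} [CommRing A]

theorem dvd_trace_of_intCast_dvd {q : ℤ} {z : A} (hz : (q : A) ∣ z) : q ∣ Algebra.trace ℤ A z := by
  obtain ⟨w, rfl⟩ := hz
  rw [← zsmul_eq_mul, map_zsmul, zsmul_eq_mul]
  exact dvd_mul_right _ _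

variable [Module.Free ℤ A] [Module.Finite ℤ A]

theorem dvd_norm_of_intCast_dvd_sq (hA : Module.finrank ℤ A = 2) {q : ℤ} (hq : Prime q) {z : A}
    (hz : (q : A) ∣ z ^ 2) : q ∣ Algebra.norm ℤ z := by
  refine hq.dvd_of_dvd_pow (n := 2) ?_
  have hqq : Algebra.norm ℤ (q : A) = q ^ 2 := by
    rw [← eq_intCast (algebraMap ℤ A),
      Algebra.norm_algebraMap_of_basis (Module.finBasisOfFinrankEq ℤ A hA), Fintype.card_fin]
  rw [← map_pow]
  exact (hqq ▸ dvd_pow_self q two_ne_zero).trans (map_dvd (Algebra.norm ℤ) hz)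

theorem dvd_trace_of_intCast_dvd_sq (hA : Module.finrank ℤ A = 2) {q : ℤ} (hq : Prime q) {z : A}
    (hz : (q : A) ∣ z ^ 2) : q ∣ Algebra.trace ℤ A z := by
  refine hq.dvd_of_dvd_pow (n := 2) ?_
  rw [← sub_add_cancel (_ ^ 2) (2 * Algebra.norm ℤ z), ← trace_sq_eq_sq_trace_sub_two_mul_norm hA]
  exact (dvd_trace_of_intCast_dvd hz).add ((dvd_norm_of_intCast_dvd_sq hA hq hz).mul_left 2)

theorem intCast_dvd_of_dvd_sq (hA : Module.finrank ℤ A = 2) {ω : A} {q : ℤ} (hq : Prime q)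
    (hqω : ¬ q ∣ Algebra.trace ℤ A ω ^ 2 - 4 * Algebra.norm ℤ ω) {z : A} (hz : (q : A) ∣ z ^ 2) :
    (q : A) ∣ z := by
  have hcast {n : ℤ} (h : q ∣ n) : (q : A) ∣ algebraMap ℤ A n := by
    simpa using map_dvd (algebraMap ℤ A) h
  have hz' : (q : A) ∣ z * (2 * ω - algebraMap ℤ A (Algebra.trace ℤ A ω)) := by
    rw [mul_two_mul_sub_trace hA]
    refine (hcast (dvd_trace_of_intCast_dvd_sq hA hq ?_)).sub
      ((hcast (dvd_trace_of_intCast_dvd_sq hA hq hz)).mul_right _)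
    exact mul_pow z ω 2 ▸ hz.mul_right _
  have hdisc : (2 * ω - algebraMap ℤ A (Algebra.trace ℤ A ω)) ^ 2 =
      ((Algebra.trace ℤ A ω ^ 2 - 4 * Algebra.norm ℤ ω : ℤ) : A) := by
    have hω := sq_eq_trace_mul_sub_norm hA ω
    simp only [eq_intCast] at hω ⊢
    push_cast
    linear_combination 4 * hω
  have hcop : IsCoprime (q : A) ((Algebra.trace ℤ A ω ^ 2 - 4 * Algebra.norm ℤ ω : ℤ) : A) :=
    (hq.coprime_iff_not_dvd.mpr hqω).intCast
  refine hcop.dvd_of_dvd_mul_right ?_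
  rw [← hdisc, sq, ← mul_assoc]
  exact hz'.mul_right _

theorem sq_trace_sub_four_mul_norm_eq (hA : Module.finrank ℤ A = 2) {ω : A} {a b : ℤ}
    (hω : ω ^ 2 = a * ω - b) (hab : a ^ 2 - 4 * b < 0) :
    Algebra.trace ℤ A ω ^ 2 - 4 * Algebra.norm ℤ ω = a ^ 2 - 4 * b := by
  have : Nontrivial A := Module.nontrivial_of_finrank_pos (R := ℤ) (hA ▸ two_pos)
  have hinj := FaithfulSMul.algebraMap_injective ℤ A
  have hω' := sq_eq_trace_mul_sub_norm hA ω
  simp only [eq_intCast] at hω'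
  set t := Algebra.trace ℤ A ω
  set n := Algebra.norm ℤ ω
  have hlin : ((t : A) - a) * ω = n - b := by linear_combination hω - hω'
  have hquad : (n - b) ^ 2 = a * ((n - b) * (t - a)) - b * (t - a) ^ 2 := by
    apply hinj
    simp only [eq_intCast]
    push_cast
    rw [← hlin]
    linear_combination ((t : A) - a) ^ 2 * hω
  have ht : t - a = 0 := by
    by_contra h
    nlinarith [sq_nonneg (2 * (n - b) - a * (t - a)), sq_pos_of_ne_zero h]
  have hn : n - b = 0 := pow_eq_zero_iff two_ne_zero |>.mp (by rw [hquad, ht]; ring)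
  rw [sub_eq_zero.mp ht, sub_eq_zero.mp hn]

end Unramified

section AmbiguousIdeals

variable {k : Type*} [Field k]

theorem exists_ringOfIntegers_sq_eq_s7 {m : ℤ} (hm : IsSquare (m : k)) : ∃ x : 𝓞 k, x ^ 2 = m := by
  obtain ⟨r, hr⟩ := (isSquare_iff_exists_sq _).mp hm
  obtain ⟨x, rfl⟩ :=
    (IsIntegralClosure.isIntegral_iff (A := 𝓞 k)).mp (isIntegral_of_sq_eq_intCast hr.symm)
  exact ⟨x, RingOfIntegers.ext (by simpa using hr.symm)⟩

theorem exists_sq_eq_self_sub [CharZero k] {c : ℤ} (h : IsSquare ((1 - 4 * c : ℤ) : k)) :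
    ∃ ω : 𝓞 k, ω ^ 2 = ω - c := by
  obtain ⟨r, hr⟩ := (isSquare_iff_exists_sq _).mp h
  have hr₂ : ((1 + r) / 2) ^ 2 = (1 + r) / 2 - c := by
    push_cast at hr
    linear_combination -hr / 4
  have hri : IsIntegral ℤ ((1 + r) / 2) := by
    refine ⟨.X ^ 2 - .X + .C c, by monicity!, ?_⟩
    rw [Polynomial.eval₂_add, Polynomial.eval₂_sub, Polynomial.eval₂_pow, Polynomial.eval₂_X,
      Polynomial.eval₂_C, eq_intCast, hr₂]
    ring
  obtain ⟨ω, hω⟩ := (IsIntegralClosure.isIntegral_iff (A := 𝓞 k)).mp hri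
  rw [← hω] at hr₂
  exact ⟨ω, RingOfIntegers.ext (by simpa using hr₂)⟩

variable [NumberField k]

theorem absNorm_eq_natAbs_of_sq_eq_span_intCast (hk : Module.finrank ℚ k = 2) {B : Ideal (𝓞 k)}
    {t : ℤ} (hB : B ^ 2 = Ideal.span {(t : 𝓞 k)}) : Ideal.absNorm B = t.natAbs := by
  have h := congrArg Ideal.absNorm hB
  rw [map_pow, Ideal.absNorm_span_singleton, ← eq_intCast (algebraMap ℤ (𝓞 k)),
    Algebra.norm_algebraMap_of_basis (Module.finBasisOfFinrankEq ℤ (𝓞 k)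
      ((RingOfIntegers.rank k).trans hk)), Fintype.card_fin, Int.natAbs_pow] at h
  exact Nat.pow_left_injective two_ne_zero h

-- At a ramified `q` one takes `c = q`, at an unramified one `π = q` and `c = q ^ 2`.
theorem isPrincipal_of_sq_eq_span_absNorm (hk : Module.finrank ℚ k = 2)
    (h : ∀ q : ℕ, q.Prime → ∃ (π : 𝓞 k) (c : ℕ), 1 < c ∧ Associated (π ^ 2) (c : 𝓞 k) ∧
      ∀ z : 𝓞 k, (q : 𝓞 k) ∣ z ^ 2 → π ∣ z)
    (B : Ideal (𝓞 k)) (hB₀ : B ≠ ⊥) (hB : B ^ 2 = Ideal.span {(Ideal.absNorm B : 𝓞 k)}) :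
    B.IsPrincipal := by
  induction hn : Ideal.absNorm B using Nat.strong_induction_on generalizing B with
  | _ n ih =>
    subst hn
    by_cases hB₁ : Ideal.absNorm B = 1
    · rw [Ideal.absNorm_eq_one_iff.mp hB₁]
      exact ⟨1, Ideal.span_singleton_one.symm⟩
    obtain ⟨q, hq, hqB⟩ := Nat.exists_prime_and_dvd hB₁
    obtain ⟨π, c, hc, hπc, hπ⟩ := h q hq
    have hle : B ≤ Ideal.span {π} := fun b hb => by
      refine Ideal.mem_span_singleton.mpr (hπ b ((Nat.cast_dvd_cast hqB).trans ?_))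
      rw [← Ideal.mem_span_singleton, ← hB]
      exact Ideal.pow_mem_pow hb 2
    obtain ⟨C, rfl⟩ := Ideal.dvd_iff_le.mpr hle
    have hπ₂ : Ideal.span {π} ^ 2 = Ideal.span {(c : 𝓞 k)} := by
      rw [Ideal.span_singleton_pow, Ideal.span_singleton_eq_span_singleton]
      exact hπc
    have hπN : Ideal.absNorm (Ideal.span {π}) = c :=
      absNorm_eq_natAbs_of_sq_eq_span_intCast hk (t := c) (by rwa [Int.cast_natCast])
    have hC₀ : C ≠ ⊥ := right_ne_zero_of_mul hB₀
    have hC : C ^ 2 = Ideal.span {(Ideal.absNorm C : 𝓞 k)} := by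
      refine mul_left_cancel₀ (hπ₂ ▸ pow_ne_zero 2 (left_ne_zero_of_mul hB₀)) ?_
      rw [← hπ₂, ← mul_pow, hB, map_mul, hπN, Nat.cast_mul, hπ₂,
        Ideal.span_singleton_mul_span_singleton]
    have hlt : Ideal.absNorm C < Ideal.absNorm (Ideal.span {π} * C) := by
      rw [map_mul, hπN]
      exact lt_mul_left (Nat.pos_of_ne_zero (Ideal.absNorm_eq_zero_iff.not.mpr hC₀)) hc
    obtain ⟨b, rfl⟩ := ih _ hlt C hC₀ hC rfl
    exact ⟨π * b, Ideal.span_singleton_mul_span_singleton π b⟩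

theorem exists_mul_eq_span_singleton_and_sq_eq_span_absNorm (hk : Module.finrank ℚ k = 2)
    (hnorm : ∀ z : 𝓞 k, 0 ≤ Algebra.norm ℤ z) {I : Ideal (𝓞 k)} (hI : I ≠ ⊥) {γ : 𝓞 k}
    (hγ : I ^ 2 = Ideal.span {γ}) :
    ∃ (B : Ideal (𝓞 k)) (β : 𝓞 k), β ≠ 0 ∧ I * B = Ideal.span {β} ∧
      B ^ 2 = Ideal.span {(Ideal.absNorm B : 𝓞 k)} := by
  set n := Ideal.absNorm I
  have hnγ : Algebra.norm ℤ γ = (n : ℤ) ^ 2 := by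
    have h := congrArg Ideal.absNorm hγ
    rw [map_pow, Ideal.absNorm_span_singleton] at h
    rw [← Int.natAbs_of_nonneg (hnorm γ), ← h, Nat.cast_pow]
  have hn₀ : n ≠ 0 := Ideal.absNorm_eq_zero_iff.not.mpr hI
  -- Since `N(γ) = n²`, the element `β = γ + n` satisfies `β² = Tr(β) γ`.
  by_cases hβ : γ + n = 0
  · have hI₂ : I ^ 2 = Ideal.span {(n : 𝓞 k)} := by
      rw [hγ, eq_neg_of_add_eq_zero_left hβ, Ideal.span_singleton_neg]
    exact ⟨I, n, Nat.cast_ne_zero.mpr hn₀, sq I ▸ hI₂, hI₂⟩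
  set t := Algebra.trace ℤ (𝓞 k) γ + 2 * n with ht
  have hβ₂ : (γ + n) ^ 2 = (t : 𝓞 k) * γ := by
    have hchar := sq_eq_trace_mul_sub_norm ((RingOfIntegers.rank k).trans hk) γ
    rw [hnγ, eq_intCast, eq_intCast] at hchar
    push_cast [ht] at hchar ⊢
    linear_combination hchar
  have hβI : Ideal.span {γ + (n : 𝓞 k)} ≤ I := by
    rw [Ideal.span_singleton_le_iff_mem]
    refine I.add_mem (Ideal.pow_le_self two_ne_zero ?_) (Ideal.absNorm_mem I)
    exact hγ ▸ Ideal.mem_span_singleton_self γ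
  obtain ⟨B, hB⟩ := Ideal.dvd_iff_le.mpr hβI
  have hB₂ : B ^ 2 = Ideal.span {(t : 𝓞 k)} := by
    refine mul_left_cancel₀ (pow_ne_zero 2 hI) ?_
    rw [← mul_pow, ← hB, Ideal.span_singleton_pow, hβ₂, hγ, mul_comm,
      Ideal.span_singleton_mul_span_singleton]
  refine ⟨B, γ + n, hβ, hB.symm, ?_⟩
  rw [hB₂, absNorm_eq_natAbs_of_sq_eq_span_intCast hk hB₂, Ideal.span_singleton_eq_span_singleton]
  simpa using ((Int.associated_natAbs t).map (Int.castRingHom (𝓞 k)))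

theorem classGroup_eq_one_of_sq_eq_one (hk : Module.finrank ℚ k = 2)
    (hnorm : ∀ z : 𝓞 k, 0 ≤ Algebra.norm ℤ z)
    (h : ∀ q : ℕ, q.Prime → ∃ (π : 𝓞 k) (c : ℕ), 1 < c ∧ Associated (π ^ 2) (c : 𝓞 k) ∧
      ∀ z : 𝓞 k, (q : 𝓞 k) ∣ z ^ 2 → π ∣ z)
    {g : ClassGroup (𝓞 k)} (hg : g ^ 2 = 1) : g = 1 := by
  obtain ⟨I, rfl⟩ := ClassGroup.mk0_surjective g
  have hI : (I : Ideal (𝓞 k)) ≠ ⊥ := nonZeroDivisors.coe_ne_zero I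
  rw [← map_pow, ClassGroup.mk0_eq_one_iff] at hg
  obtain ⟨γ, hγ⟩ := hg
  obtain ⟨B, β, hβ, hIB, hB⟩ :=
    exists_mul_eq_span_singleton_and_sq_eq_span_absNorm hk hnorm hI hγ
  have hIB₀ : (I : Ideal (𝓞 k)) * B ≠ ⊥ := by
    rwa [hIB, Ne, Ideal.span_singleton_eq_bot]
  have hB₀ : B ≠ ⊥ := right_ne_zero_of_mul hIB₀
  have hone : ClassGroup.mk0 ⟨B, mem_nonZeroDivisors_of_ne_zero hB₀⟩ = 1 :=
    (ClassGroup.mk0_eq_one_iff _).mpr (isPrincipal_of_sq_eq_span_absNorm hk h B hB₀ hB)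
  have hmul : ClassGroup.mk0 I * ClassGroup.mk0 ⟨B, mem_nonZeroDivisors_of_ne_zero hB₀⟩ = 1 := by
    rw [← map_mul, ClassGroup.mk0_eq_one_iff]
    exact ⟨β, hIB⟩
  rwa [hone, mul_one] at hmul

theorem exists_sq_associated_and_forall_dvd (hk : Module.finrank ℚ k = 2) {ω : 𝓞 k} {a b : ℤ}
    (hω : ω ^ 2 = a * ω - b) (hab : a ^ 2 - 4 * b < 0) {q : ℕ} (hq : q.Prime)
    (h : (q : ℤ) ∣ a ^ 2 - 4 * b → ∃ π : 𝓞 k, Associated (π ^ 2) (q : 𝓞 k)) :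
    ∃ (π : 𝓞 k) (c : ℕ), 1 < c ∧ Associated (π ^ 2) (c : 𝓞 k) ∧
      ∀ z : 𝓞 k, (q : 𝓞 k) ∣ z ^ 2 → π ∣ z := by
  by_cases hqd : (q : ℤ) ∣ a ^ 2 - 4 * b
  · obtain ⟨π, hπ⟩ := h hqd
    exact ⟨π, q, hq.one_lt, hπ, fun z hz =>
      (IsIntegrallyClosed.pow_dvd_pow_iff two_ne_zero).mp (hπ.dvd.trans hz)⟩
  · have hA : Module.finrank ℤ (𝓞 k) = 2 := (RingOfIntegers.rank k).trans hk
    rw [← sq_trace_sub_four_mul_norm_eq hA hω hab] at hqd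
    refine ⟨q, q ^ 2, one_lt_pow₀ hq.one_lt two_ne_zero, by rw [Nat.cast_pow], fun z hz => ?_⟩
    exact_mod_cast intCast_dvd_of_dvd_sq hA (Nat.prime_iff_prime_int.mp hq) hqd
      (by exact_mod_cast hz)

theorem classGroup_eq_one_of_sq_eq_one_of_forall_dvd_discrim (hk : Module.finrank ℚ k = 2)
    {ω : 𝓞 k} {a b : ℤ} (hω : ω ^ 2 = a * ω - b) (hab : a ^ 2 - 4 * b < 0)
    (h : ∀ q : ℕ, q.Prime → (q : ℤ) ∣ a ^ 2 - 4 * b → ∃ π : 𝓞 k, Associated (π ^ 2) (q : 𝓞 k))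
    {g : ClassGroup (𝓞 k)} (hg : g ^ 2 = 1) : g = 1 := by
  have : Algebra.IsQuadraticExtension ℚ k := ⟨hk⟩
  have hsq : IsSquare ((a ^ 2 - 4 * b : ℤ) : 𝓞 k) := by
    refine (isSquare_iff_exists_sq _).mpr ⟨2 * ω - a, ?_⟩
    push_cast
    linear_combination -4 * hω
  have hsqk : IsSquare ((a ^ 2 - 4 * b : ℤ) : k) := by
    rw [← map_intCast (algebraMap (𝓞 k) k)]
    exact hsq.map _
  exact classGroup_eq_one_of_sq_eq_one hk (norm_nonneg_of_isSquare_of_neg hab hsqk)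
    (fun q hq => exists_sq_associated_and_forall_dvd hk hω hab hq (h q hq)) hg

theorem classGroup_eq_one_of_sq_eq_one_of_primeStar (hk : Module.finrank ℚ k = 2) {p : ℕ}
    (hp : p.Prime) (hodd : Odd p) (hneg : primeStar p < 0) (hpk : IsSquare (primeStar p : k))
    {g : ClassGroup (𝓞 k)} (hg : g ^ 2 = 1) : g = 1 := by
  obtain ⟨δ, hδ⟩ := exists_ringOfIntegers_sq_eq_s7 hpk
  have hδp : Associated (δ ^ 2) (p : 𝓞 k) := by
    rw [hδ, show primeStar p = -p by have := natAbs_primeStar p; omega, Int.cast_neg,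
      Int.cast_natCast]
    exact (Associated.refl _).neg_left
  obtain ⟨c, hc⟩ := (primeStar_modEq_one hodd).dvd
  have hpc : primeStar p = 1 - 4 * c := by omega
  obtain ⟨ω, hω⟩ := exists_sq_eq_self_sub (hpc ▸ hpk)
  have hdisc : (1 : ℤ) ^ 2 - 4 * c = primeStar p := by rw [one_pow, hpc]
  refine classGroup_eq_one_of_sq_eq_one_of_forall_dvd_discrim hk (ω := ω) (a := 1) (b := c)
    (by simpa using hω) (hdisc ▸ hneg) (fun q hq hqd => ⟨δ, ?_⟩) hg
  rw [hdisc, Int.natCast_dvd, natAbs_primeStar, Nat.prime_dvd_prime_iff_eq hq hp] at hqd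
  rwa [hqd]

theorem classGroup_eq_one_of_sq_eq_one_of_pstar (hk : Module.finrank ℚ k = 2) {d : ℤ}
    (hd : Pstar d) (hneg : d < 0) (hdk : IsSquare (d : k)) {g : ClassGroup (𝓞 k)}
    (hg : g ^ 2 = 1) : g = 1 := by
  have htwo {q n : ℕ} (hq : q.Prime) (h : (q : ℤ) ∣ -2 ^ n) : q = 2 := by
    rw [dvd_neg] at h
    exact (Nat.prime_dvd_prime_iff_eq hq Nat.prime_two).mp (hq.dvd_of_dvd_pow (by exact_mod_cast h))
  obtain rfl | rfl | rfl | ⟨p, hp, hodd, rfl⟩ := hd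
  · omega
  · obtain ⟨i, hi⟩ :=
      exists_ringOfIntegers_sq_eq_s7 (isSquare_intCast_four_mul_iff (m := -1).mp hdk)
    rw [Int.cast_neg, Int.cast_one] at hi
    refine classGroup_eq_one_of_sq_eq_one_of_forall_dvd_discrim hk (ω := i) (a := 0) (b := 1)
      (by push_cast; linear_combination hi) (by norm_num) (fun q hq hqd => ⟨1 + i, ?_⟩) hg
    obtain rfl := htwo hq (n := 2) hqd
    have hunit : IsUnit i := IsUnit.of_mul_eq_one (-i) (by linear_combination -hi)
    rw [show (1 + i) ^ 2 = (2 : ℕ) * i by push_cast; linear_combination hi]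
    exact associated_mul_unit_left _ _ hunit
  · obtain ⟨π, hπ⟩ :=
      exists_ringOfIntegers_sq_eq_s7 (isSquare_intCast_four_mul_iff (m := -2).mp hdk)
    have hπ' : π ^ 2 = -2 := by simpa using hπ
    refine classGroup_eq_one_of_sq_eq_one_of_forall_dvd_discrim hk (ω := π) (a := 0) (b := 2)
      (by push_cast; linear_combination hπ') (by norm_num) (fun q hq hqd => ⟨π, ?_⟩) hg
    obtain rfl := htwo hq (n := 3) hqd
    rw [hπ', Nat.cast_ofNat]
    exact (Associated.refl _).neg_left
  · exact classGroup_eq_one_of_sq_eq_one_of_primeStar hk hp hodd hneg hdk hg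

end AmbiguousIdeals

section Descent

theorem exponent_dvd_of_exponent_dvd_mul {G : Type*} [Group G] {n u : ℕ}
    (hn : ∀ g : G, g ^ n = 1 → g = 1) (h : Monoid.exponent G ∣ n * u) : Monoid.exponent G ∣ u := by
  rw [Monoid.exponent_dvd_iff_forall_pow_eq_one] at h ⊢
  exact fun g => hn _ (by rw [← pow_mul, mul_comm, h])

theorem exponent_classGroup_dvd_finrank_mul {k K : Type*} [Field k] [NumberField k] [Field K]
    [NumberField K] [Algebra k K] {u : ℕ} (hE : Monoid.exponent (ClassGroup (𝓞 K)) ∣ u) :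
    Monoid.exponent (ClassGroup (𝓞 k)) ∣ Module.finrank k K * u := by
  rw [Monoid.exponent_dvd_iff_forall_pow_eq_one]
  intro c
  obtain ⟨I, rfl⟩ := ClassGroup.mk0_surjective c
  have hI : (I : Ideal (𝓞 k)).map (algebraMap (𝓞 k) (𝓞 K)) ≠ ⊥ :=
    (Ideal.map_eq_bot_iff_of_injective (FaithfulSMul.algebraMap_injective _ _)).not.mpr
      (nonZeroDivisors.coe_ne_zero I)
  obtain ⟨α, hα⟩ := exists_pow_eq_span_singleton hE hI
  have hnorm := congrArg (Ideal.relNorm (𝓞 k)) hα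
  rw [map_pow, Ideal.relNorm_algebraMap, Ideal.relNorm_singleton, ← pow_mul,
    ← IsFractionRing.finrank_eq (𝓞 k) k (𝓞 K) K] at hnorm
  rw [← map_pow, ClassGroup.mk0_eq_one_iff]
  exact ⟨_, hnorm⟩

end Descent

section ComplexSubfields

theorem isSquare_intCast_Qsqrt (m : ℤ) : IsSquare (m : Qsqrt m) := by
  refine ⟨⟨_, IntermediateField.mem_adjoin_simple_self ℚ ((m : ℂ) ^ ((1 : ℂ) / 2))⟩,
    Subtype.ext ?_⟩
  simp [← sq]

theorem Qsqrt_le {m : ℤ} {K : IntermediateField ℚ ℂ} (h : IsSquare (m : K)) : Qsqrt m ≤ K := by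
  obtain ⟨w, hw⟩ := (isSquare_iff_exists_sq _).mp h
  have hw' : ((m : ℂ) ^ ((1 : ℂ) / 2)) ^ 2 = (w : ℂ) ^ 2 := by
    rw [one_div]
    refine (Complex.cpow_nat_inv_pow (m : ℂ) two_ne_zero).trans ?_
    simpa using congrArg Subtype.val hw
  rw [Qsqrt, IntermediateField.adjoin_simple_le_iff]
  obtain h | h := sq_eq_sq_iff_eq_or_eq_neg.mp hw' <;> rw [h]
  · exact w.2
  · exact neg_mem w.2

theorem finrank_Qsqrt {m : ℤ} (hm : ¬ IsSquare m) : Module.finrank ℚ (Qsqrt m) = 2 := by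
  have hmonic : (Polynomial.X ^ 2 - Polynomial.C (m : ℚ)).Monic :=
    Polynomial.monic_X_pow_sub_C _ two_ne_zero
  have hroot : Polynomial.aeval ((m : ℂ) ^ ((1 : ℂ) / 2))
      (Polynomial.X ^ 2 - Polynomial.C (m : ℚ)) = 0 := by
    simp
  have hirr : Irreducible (Polynomial.X ^ 2 - Polynomial.C (m : ℚ)) :=
    X_pow_sub_C_irreducible_of_prime Nat.prime_two fun c hc =>
      hm (Rat.isSquare_intCast_iff.mp ⟨c, by rw [← hc, sq]⟩)
  rw [Qsqrt, IntermediateField.adjoin.finrank ⟨_, hmonic, hroot⟩,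
    ← minpoly.eq_of_irreducible_of_monic hirr hroot hmonic, Polynomial.natDegree_X_pow_sub_C]

/-- The field `ℝ`, viewed as a subfield of `ℂ`, so that a subfield of `ℂ` is imaginary when it is
not contained in it. -/
noncomputable def realSubfield : IntermediateField ℚ ℂ :=
  (Complex.ofRealAm.restrictScalars ℚ).fieldRange

theorem isSquare_intCast_realSubfield_iff {m : ℤ} : IsSquare (m : realSubfield) ↔ 0 ≤ m := by
  have e : ℝ ≃ₐ[ℚ] realSubfield := AlgEquiv.ofInjectiveField (Complex.ofRealAm.restrictScalars ℚ)
  have he : IsSquare (m : realSubfield) ↔ IsSquare (m : ℝ) :=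
    ⟨fun h => by simpa using h.map e.symm, fun h => by simpa using h.map e⟩
  rw [he, Real.isSquare_iff, Int.cast_nonneg_iff]

theorem IsImaginary.not_le_realSubfield {K : IntermediateField ℚ ℂ} (h : IsImaginary K) :
    ¬ K ≤ realSubfield := by
  intro hK
  obtain ⟨x, hx⟩ := h
  obtain ⟨y, hy⟩ := hK x.2
  exact hx (hy ▸ Complex.ofReal_im y)

theorem IsNQuadratic.algEquiv_sq_eq_one {n : ℕ} {K : IntermediateField ℚ ℂ} (hK : IsNQuadratic n K)
    (σ : K ≃ₐ[ℚ] K) : σ ^ 2 = 1 := by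
  obtain ⟨-, -, ⟨e⟩⟩ := hK
  refine e.injective (funext fun i => ?_)
  rw [map_pow, map_one, Pi.pow_apply, Pi.one_apply]
  generalize e σ i = a
  revert a
  decide

theorem IsNQuadratic.finrank_eq {n : ℕ} {K : IntermediateField ℚ ℂ} (hK : IsNQuadratic n K) :
    Module.finrank ℚ K = 2 ^ n := by
  obtain ⟨_, _, ⟨e⟩⟩ := hK
  rw [← IsGalois.card_aut_eq_finrank, Nat.card_congr e.toEquiv, Nat.card_fun, Nat.card_fin]
  simp

theorem finiteDimensional_of_le {F L : Type*} [Field F] [Field L] [Algebra F L]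
    {A K : IntermediateField F L} [FiniteDimensional F K] (h : A ≤ K) : FiniteDimensional F A :=
  .of_injective (IntermediateField.inclusion h).toLinearMap
    (IntermediateField.inclusion_injective h)

theorem eq_of_lt_of_le_of_finrank_eq_prime_mul {F L : Type*} [Field F] [Field L] [Algebra F L]
    {A M K : IntermediateField F L} [FiniteDimensional F K] (hAM : A < M) (hMK : M ≤ K) {p : ℕ}
    (hp : p.Prime) (h : Module.finrank F K = p * Module.finrank F A) : M = K := by
  have : FiniteDimensional F M := finiteDimensional_of_le hMK
  have : FiniteDimensional F A := finiteDimensional_of_le hAM.le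
  obtain ⟨c, hc⟩ := IntermediateField.finrank_dvd_of_le_right hAM.le
  have hcp : c ∣ p := by
    refine Nat.dvd_of_mul_dvd_mul_left (Module.finrank_pos (R := F) (M := A)) ?_
    rw [← hc, mul_comm, ← h]
    exact IntermediateField.finrank_dvd_of_le_right hMK
  obtain rfl | rfl := (Nat.dvd_prime hp).mp hcp
  · exact absurd (IntermediateField.eq_of_le_of_finrank_eq hAM.le (by rw [hc, mul_one])) hAM.ne
  · exact IntermediateField.eq_of_le_of_finrank_eq hMK (by rw [hc, h, mul_comm])

theorem eq_Qsqrt_sup_Qsqrt_of_isSquare {K : IntermediateField ℚ ℂ} [FiniteDimensional ℚ K]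
    (hK : Module.finrank ℚ K = 4) {a b : ℤ} (ha : ¬ IsSquare a) (haK : IsSquare (a : K))
    (hbK : IsSquare (b : K)) (hb : ¬ IsSquare (b : Qsqrt a)) : K = Qsqrt a ⊔ Qsqrt b := by
  have hlt : Qsqrt a < Qsqrt a ⊔ Qsqrt b := by
    refine left_lt_sup.mpr fun hle => hb ?_
    simpa using (isSquare_intCast_Qsqrt b).map (IntermediateField.inclusion hle)
  exact (eq_of_lt_of_le_of_finrank_eq_prime_mul hlt (sup_le (Qsqrt_le haK) (Qsqrt_le hbK))
    Nat.prime_two (by rw [hK, finrank_Qsqrt ha])).symm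

theorem Efield_Qsqrt_dvd_two_mul {K : IntermediateField ℚ ℂ} [NumberField K]
    (hK : Module.finrank ℚ K = 4) {u : ℕ} (hE : Efield K ∣ u) {m : ℤ} (hm : ¬ IsSquare m)
    (hmK : IsSquare (m : K)) : Efield (Qsqrt m) ∣ 2 * u := by
  have hle := Qsqrt_le hmK
  have : NumberField (Qsqrt m) := { to_finiteDimensional := finiteDimensional_of_le hle }
  let _ : Algebra (Qsqrt m) K := (IntermediateField.inclusion hle).toRingHom.toAlgebra
  have hfin := Module.finrank_mul_finrank ℚ (Qsqrt m) K
  rw [hK, finrank_Qsqrt hm] at hfin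
  rw [show 2 = Module.finrank (Qsqrt m) K by omega]
  exact exponent_classGroup_dvd_finrank_mul hE

theorem Efield_Qsqrt_dvd_of_pstar {d : ℤ} (hd : Pstar d) (hneg : d < 0) {u : ℕ}
    (h : Efield (Qsqrt d) ∣ 2 * u) : Efield (Qsqrt d) ∣ u := by
  have hfin : Module.finrank ℚ (Qsqrt d) = 2 := finrank_Qsqrt fun hs => hneg.not_ge hs.nonneg
  have : NumberField (Qsqrt d) :=
    { to_finiteDimensional := Module.finite_of_finrank_eq_succ hfin }
  exact exponent_dvd_of_exponent_dvd_mul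
    (fun g => classGroup_eq_one_of_sq_eq_one_of_pstar hfin hd hneg (isSquare_intCast_Qsqrt d)) h

theorem IsMultiquadratic.exists_neg_of_not_le_realSubfield {K : IntermediateField ℚ ℂ}
    [NumberField K] {S : Finset ℤ} (hS : IsMultiquadratic K S) (hK : ¬ K ≤ realSubfield) :
    ∃ m ∈ S, m < 0 := by
  by_contra! h
  exact hK (hS.le_of_forall_isSquare fun m hm => isSquare_intCast_realSubfield_iff.mpr (h m hm))

end ComplexSubfields

/-- Theorem on the shape of imaginary biquadratic fields whose class group has
exponent dividing an odd number `u`. -/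
theorem stmt7 (u : ℕ) (hu : Odd u) (hupos : 0 < u)
    (K : IntermediateField ℚ ℂ)
    (hK : IsNQuadratic 2 K) (him : IsImaginary K)
    (hE : Efield K ∣ u) :
    ∃ p₁ p₂ : ℤ, Pstar p₁ ∧ p₁ < 0 ∧ Pstar p₂ ∧
      K = Qsqrt p₁ ⊔ Qsqrt p₂ ∧
      Efield (Qsqrt p₁) ∣ u ∧
      (p₂ < 0 → Efield (Qsqrt p₂) ∣ u) ∧
      (0 < p₂ → Efield (Qsqrt (p₁ * p₂)) ∣ 2 * u) := by
  have hfin : Module.finrank ℚ K = 4 := hK.finrank_eq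
  have : IsGalois ℚ K := hK.2.1
  have : NumberField K := { to_finiteDimensional := hK.1 }
  obtain ⟨S, hS⟩ := exists_isMultiquadratic hK.algEquiv_sq_eq_one
  obtain ⟨m, hmS, hm⟩ := hS.exists_neg_of_not_le_realSubfield him.not_le_realSubfield
  have hnorm := norm_nonneg_of_isSquare_of_neg hm (hS.isSquare m hmS)
  obtain ⟨p₁, hp₁, hp₁K, hp₁R⟩ :=
    hS.exists_pstar_isSquare_and_not_isSquare hu hE hnorm him.not_le_realSubfield
  have hneg : p₁ < 0 := not_le.mp (isSquare_intCast_realSubfield_iff.not.mp hp₁R)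
  have hnsq {a : ℤ} (ha : a < 0) : ¬ IsSquare a := fun h => ha.not_ge h.nonneg
  have hlt : ¬ K ≤ Qsqrt p₁ := fun hle => by
    have := finrank_Qsqrt (hnsq hneg)
    rw [← le_antisymm hle (Qsqrt_le hp₁K), hfin] at this
    omega
  obtain ⟨p₂, hp₂, hp₂K, hp₂p₁⟩ := hS.exists_pstar_isSquare_and_not_isSquare hu hE hnorm hlt
  have hdescent {a : ℤ} (ha : a < 0) (haK : IsSquare (a : K)) :=
    Efield_Qsqrt_dvd_two_mul hfin hE (hnsq ha) haK
  exact ⟨p₁, p₂, hp₁, hneg, hp₂,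
    eq_Qsqrt_sup_Qsqrt_of_isSquare hfin (hnsq hneg) hp₁K hp₂K hp₂p₁,
    Efield_Qsqrt_dvd_of_pstar hp₁ hneg (hdescent hneg hp₁K),
    fun h => Efield_Qsqrt_dvd_of_pstar hp₂ h (hdescent h hp₂K),
    fun h => hdescent (mul_neg_of_neg_of_pos hneg h) (by simpa using hp₁K.mul hp₂K)⟩
end
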